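/- arXiv:1303.3651 — 10 statements merged into one kernel-verified Lean document; each statement's English description precedes it below -/
import Mathlib

section
/- Suppose all data is ready before transmission: B_1 = B ≥ 0 and B_i = 0 for i ≥ 2, and suppose E_i ≤ E_max for all i ≥ 2. For P ≥ 0 let f(P) be the supremum of the total throughput Σ_{i=1}^N (T_f/2)·log₂(1 + γ_i p_i) over allocations (p, p_H) with 0 ≤ p_{H,i} ≤ p_i satisfying Causality, Capacity, and the average grid-power constraint (1/N)·Σ_{i=1}^N (p_i − p_{H,i}) ≤ P; for b ≥ 0 let g(b) be the infimum of the average grid power (1/N)·Σ_{i=1}^N (p_i − p_{H,i}) over allocations with 0 ≤ p_{H,i} ≤ p_i satisfying Causality, Capacity, and Σ_{i=1}^N (T_f/2)·log₂(1 + γ_i p_i) ≥ b. If for a given P ≥ 0 the supremum defining f(P) is attained by some feasible allocation and the infimum defining g(f(P)) is attained by some feasible allocation, then g(f(P)) = P. -/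
/-!
Frames are indexed by `i ∈ {1, …, N}` (we use functions `ℕ → ℝ`, with only the
coordinates in `Finset.Icc 1 N` relevant).  The rate of frame `i` under power `p i`
is `Tf / 2 * logb 2 (1 + γ i * p i)`.
-/

/-- Rate of frame `i`. -/
noncomputable def rate (Tf : ℝ) (γ p : ℕ → ℝ) (i : ℕ) : ℝ :=
  Tf / 2 * Real.logb 2 (1 + γ i * p i)

/-- `0 ≤ p_{H,i} ≤ p_i` for all frames. -/
def Alloc (N : ℕ) (p pH : ℕ → ℝ) : Prop :=
  ∀ i ∈ Finset.Icc 1 N, 0 ≤ pH i ∧ pH i ≤ p i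

/-- Energy causality: `Σ_{i=1}^k T_f p_{H,i} ≤ Σ_{i=1}^k E_i` for `k = 1, …, N`. -/
def Causality (N : ℕ) (Tf : ℝ) (E pH : ℕ → ℝ) : Prop :=
  ∀ k ∈ Finset.Icc 1 N, ∑ i ∈ Finset.Icc 1 k, Tf * pH i ≤ ∑ i ∈ Finset.Icc 1 k, E i

/-- Battery capacity: `Σ_{i=1}^{k+1} E_i − Σ_{i=1}^k T_f p_{H,i} ≤ E_max` for
`k = 1, …, N−1`. -/
def Capacity (N : ℕ) (Tf Emax : ℝ) (E pH : ℕ → ℝ) : Prop :=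
  ∀ k ∈ Finset.Icc 1 (N - 1),
    (∑ i ∈ Finset.Icc 1 (k + 1), E i) - ∑ i ∈ Finset.Icc 1 k, Tf * pH i ≤ Emax

/-- with all data ready before transmission, if the supremum defining
`f P` and the infimum defining `g (f P)` are attained, then `g (f P) = P`. -/
theorem statement_0
    (N : ℕ) (hN : 1 ≤ N) (Tf : ℝ) (hTf : 0 < Tf)
    (γ E B : ℕ → ℝ) (Emax : ℝ) (hEmax : 0 ≤ Emax)
    (hγ : ∀ i ∈ Finset.Icc 1 N, 0 < γ i)
    (hE : ∀ i ∈ Finset.Icc 1 N, 0 ≤ E i)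
    -- all data ready before transmission: `B 1 = B ≥ 0` and `B i = 0` for `i ≥ 2`
    (hB1 : 0 ≤ B 1)
    (hB0 : ∀ i ∈ Finset.Icc 2 N, B i = 0)
    -- each later energy arrival fits in the battery
    (hEcap : ∀ i ∈ Finset.Icc 2 N, E i ≤ Emax)
    (f g : ℝ → ℝ)
    (hf : ∀ P : ℝ, f P = sSup {t : ℝ | ∃ p pH : ℕ → ℝ,
      Alloc N p pH ∧ Causality N Tf E pH ∧ Capacity N Tf Emax E pH ∧
      (1 / (N : ℝ)) * ∑ i ∈ Finset.Icc 1 N, (p i - pH i) ≤ P ∧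
      t = ∑ i ∈ Finset.Icc 1 N, rate Tf γ p i})
    (hg : ∀ b : ℝ, g b = sInf {v : ℝ | ∃ p pH : ℕ → ℝ,
      Alloc N p pH ∧ Causality N Tf E pH ∧ Capacity N Tf Emax E pH ∧
      b ≤ ∑ i ∈ Finset.Icc 1 N, rate Tf γ p i ∧
      v = (1 / (N : ℝ)) * ∑ i ∈ Finset.Icc 1 N, (p i - pH i)})
    (P : ℝ) (hP : 0 ≤ P)
    -- the supremum defining `f P` is attained by a feasible allocation
    (hattF : f P ∈ {t : ℝ | ∃ p pH : ℕ → ℝ,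
      Alloc N p pH ∧ Causality N Tf E pH ∧ Capacity N Tf Emax E pH ∧
      (1 / (N : ℝ)) * ∑ i ∈ Finset.Icc 1 N, (p i - pH i) ≤ P ∧
      t = ∑ i ∈ Finset.Icc 1 N, rate Tf γ p i})
    -- the infimum defining `g (f P)` is attained by a feasible allocation
    (hattG : g (f P) ∈ {v : ℝ | ∃ p pH : ℕ → ℝ,
      Alloc N p pH ∧ Causality N Tf E pH ∧ Capacity N Tf Emax E pH ∧
      f P ≤ ∑ i ∈ Finset.Icc 1 N, rate Tf γ p i ∧
      v = (1 / (N : ℝ)) * ∑ i ∈ Finset.Icc 1 N, (p i - pH i)}) :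
    g (f P) = P := by
  have hNpos : (0 : ℝ) < N := by exact_mod_cast hN
  apply le_antisymm
  · obtain ⟨p, pH, hA, hC, hK, hPle, ht⟩ := hattF
    rw [hg]
    refine le_trans (csInf_le ?_ ⟨p, pH, hA, hC, hK, ht.le, rfl⟩) hPle
    refine ⟨0, ?_⟩
    rintro v ⟨q, qH, hA', -, -, -, rfl⟩
    refine mul_nonneg (by positivity) (Finset.sum_nonneg fun i hi => ?_)
    linarith [(hA' i hi).2]
  · by_contra hlt
    push Not at hlt
    obtain ⟨p, pH, hA, hC, hK, hb, hv⟩ := hattG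
    have h1 : 1 ∈ Finset.Icc 1 N := Finset.mem_Icc.2 ⟨le_refl 1, hN⟩
    obtain ⟨d, hd⟩ : ∃ d : ℝ, d = N * (P - g (f P)) := ⟨_, rfl⟩
    have hdpos : 0 < d := by
      rw [hd]; exact mul_pos hNpos (by linarith)
    obtain ⟨q, hq⟩ : ∃ q : ℕ → ℝ, q = fun i => p i + if i = 1 then d else 0 := ⟨_, rfl⟩
    have hpq : ∀ i, p i ≤ q i := by
      intro i; rw [hq]; dsimp only; split_ifs <;> linarith
    have hq1 : p 1 < q 1 := by
      rw [hq]; simp [hdpos]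
    have hsum : (1 / (N : ℝ)) * ∑ i ∈ Finset.Icc 1 N, (q i - pH i) ≤ P := by
      have : ∑ i ∈ Finset.Icc 1 N, (q i - pH i) = ∑ i ∈ Finset.Icc 1 N, (p i - pH i) + d := by
        have h2 : ∑ i ∈ Finset.Icc 1 N, (if i = 1 then d else 0) = d := by
          rw [Finset.sum_ite_eq' (Finset.Icc 1 N) 1 (fun _ => d), if_pos h1]
        rw [← h2, ← Finset.sum_add_distrib]
        refine Finset.sum_congr rfl fun i _ => ?_
        rw [hq]; ring_nf
      rw [this, mul_add, ← hv, hd]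
      apply le_of_eq
      field_simp
      ring
    have hrate : ∑ i ∈ Finset.Icc 1 N, rate Tf γ p i < ∑ i ∈ Finset.Icc 1 N, rate Tf γ q i := by
      refine Finset.sum_lt_sum (fun i hi => ?_) ⟨1, h1, ?_⟩
      · unfold rate
        have hp0 : 0 ≤ p i := (hA i hi).1.trans (hA i hi).2
        have hg0 := hγ i hi
        refine mul_le_mul_of_nonneg_left ?_ (by positivity)
        refine Real.logb_le_logb_of_le (by norm_num) (by positivity) ?_
        have := mul_le_mul_of_nonneg_left (hpq i) hg0.le
        linarith
      · unfold rate
        have hp0 : 0 ≤ p 1 := (hA 1 h1).1.trans (hA 1 h1).2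
        have hg0 := hγ 1 h1
        refine mul_lt_mul_of_pos_left ?_ (by positivity)
        refine Real.logb_lt_logb (by norm_num) (by positivity) ?_
        have := mul_lt_mul_of_pos_left hq1 hg0
        linarith
    have hle : ∑ i ∈ Finset.Icc 1 N, rate Tf γ q i ≤ f P := by
      rw [hf]
      refine le_csSup ?_ ⟨q, pH, fun i hi => ⟨(hA i hi).1, (hA i hi).2.trans (hpq i)⟩,
        hC, hK, hsum, rfl⟩
      refine ⟨∑ i ∈ Finset.Icc 1 N, Tf / 2 * Real.logb 2
        (1 + γ i * (N * P + (∑ i ∈ Finset.Icc 1 N, E i) / Tf)), ?_⟩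
      rintro t ⟨r, rH, hA', hC', -, hP', rfl⟩
      refine Finset.sum_le_sum fun i hi => ?_
      unfold rate
      have hr0 : 0 ≤ r i := (hA' i hi).1.trans (hA' i hi).2
      have hg0 := hγ i hi
      have ha : r i - rH i ≤ N * P := by
        have h3 := Finset.single_le_sum (f := fun i => r i - rH i)
          (fun j hj => sub_nonneg.2 (hA' j hj).2) hi
        rw [one_div, inv_mul_le_iff₀ hNpos] at hP'
        exact h3.trans hP'
      have hb' : rH i ≤ (∑ i ∈ Finset.Icc 1 N, E i) / Tf := by
        have h3 := Finset.single_le_sum (f := fun i => Tf * rH i)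
          (fun j hj => mul_nonneg hTf.le (hA' j hj).1) hi
        have h4 := h3.trans (hC' N (Finset.mem_Icc.2 ⟨hN, le_refl N⟩))
        rw [le_div_iff₀ hTf, mul_comm]
        exact h4
      refine mul_le_mul_of_nonneg_left ?_ (by positivity)
      refine Real.logb_le_logb_of_le (by norm_num) (by positivity) ?_
      have := mul_le_mul_of_nonneg_left
        (show r i ≤ N * P + (∑ i ∈ Finset.Icc 1 N, E i) / Tf by linarith) hg0.le
      linarith
    linarith
end

section
/- Suppose E_i ≤ E_max for all i ≥ 2. For P ≥ 0 let f(P) be the supremum of the total throughput Σ_{i=1}^N (T_f/2)·log₂(1 + γ_i p_i) over allocations (p, p_H) with 0 ≤ p_{H,i} ≤ p_i satisfying Causality, Capacity, and the average grid-power constraint (1/N)·Σ_{i=1}^N (p_i − p_{H,i}) ≤ P. Then f is strictly increasing: for all 0 ≤ P₁ < P₂, if the suprema defining f(P₁) and f(P₂) are attained by feasible allocations, then f(P₁) < f(P₂). -/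
/-- the maximal throughput `f` is strictly increasing in the average
grid power budget `P`, whenever the defining suprema are attained. -/
theorem statement_1
    (N : ℕ) (hN : 1 ≤ N) (Tf : ℝ) (hTf : 0 < Tf)
    (γ E : ℕ → ℝ) (Emax : ℝ) (hEmax : 0 ≤ Emax)
    (hγ : ∀ i ∈ Finset.Icc 1 N, 0 < γ i)
    (hE : ∀ i ∈ Finset.Icc 1 N, 0 ≤ E i)
    (hEcap : ∀ i ∈ Finset.Icc 2 N, E i ≤ Emax)
    (f : ℝ → ℝ)
    (hf : ∀ P : ℝ, f P = sSup {t : ℝ | ∃ p pH : ℕ → ℝ,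
      Alloc N p pH ∧ Causality N Tf E pH ∧ Capacity N Tf Emax E pH ∧
      (1 / (N : ℝ)) * ∑ i ∈ Finset.Icc 1 N, (p i - pH i) ≤ P ∧
      t = ∑ i ∈ Finset.Icc 1 N, rate Tf γ p i})
    (P₁ P₂ : ℝ) (hP₁ : 0 ≤ P₁) (hP₁₂ : P₁ < P₂)
    (hatt₁ : f P₁ ∈ {t : ℝ | ∃ p pH : ℕ → ℝ,
      Alloc N p pH ∧ Causality N Tf E pH ∧ Capacity N Tf Emax E pH ∧
      (1 / (N : ℝ)) * ∑ i ∈ Finset.Icc 1 N, (p i - pH i) ≤ P₁ ∧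
      t = ∑ i ∈ Finset.Icc 1 N, rate Tf γ p i})
    (hatt₂ : f P₂ ∈ {t : ℝ | ∃ p pH : ℕ → ℝ,
      Alloc N p pH ∧ Causality N Tf E pH ∧ Capacity N Tf Emax E pH ∧
      (1 / (N : ℝ)) * ∑ i ∈ Finset.Icc 1 N, (p i - pH i) ≤ P₂ ∧
      t = ∑ i ∈ Finset.Icc 1 N, rate Tf γ p i}) :
    f P₁ < f P₂ := by
  obtain ⟨p, pH, hA, hC, hK, hG, hR⟩ := hatt₁
  have hN0 : (0 : ℝ) < N := by exact_mod_cast hN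
  have hbdd : BddAbove {t : ℝ | ∃ p pH : ℕ → ℝ,
      Alloc N p pH ∧ Causality N Tf E pH ∧ Capacity N Tf Emax E pH ∧
      (1 / (N : ℝ)) * ∑ i ∈ Finset.Icc 1 N, (p i - pH i) ≤ P₂ ∧
      t = ∑ i ∈ Finset.Icc 1 N, rate Tf γ p i} := by
    refine ⟨∑ i ∈ Finset.Icc 1 N, Tf / 2 * Real.logb 2
      (1 + γ i * (N * P₂ + (∑ j ∈ Finset.Icc 1 N, E j) / Tf)), ?_⟩
    rintro t ⟨q, qH, hA, hC, -, hG, rfl⟩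
    refine Finset.sum_le_sum fun i hi => ?_
    have h1 : q i - qH i ≤ ∑ i ∈ Finset.Icc 1 N, (q i - qH i) :=
      Finset.single_le_sum (f := fun i => q i - qH i)
        (fun j hj => sub_nonneg.2 (hA j hj).2) hi
    have h2 : Tf * qH i ≤ ∑ i ∈ Finset.Icc 1 N, Tf * qH i :=
      Finset.single_le_sum (f := fun i => Tf * qH i)
        (fun j hj => mul_nonneg hTf.le (hA j hj).1) hi
    have h3 := hC N (Finset.mem_Icc.2 ⟨hN, le_rfl⟩)
    have h4 : qH i ≤ (∑ j ∈ Finset.Icc 1 N, E j) / Tf := by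
      rw [le_div_iff₀ hTf]; linarith
    have h5 : ∑ i ∈ Finset.Icc 1 N, (q i - qH i) ≤ N * P₂ := by
      rw [one_div, inv_mul_le_iff₀ hN0] at hG
      exact hG
    have hq : 0 ≤ q i := (hA i hi).1.trans (hA i hi).2
    have hg := hγ i hi
    unfold rate
    refine mul_le_mul_of_nonneg_left ?_ (by positivity)
    refine Real.logb_le_logb_of_le (by norm_num) (by positivity) ?_
    have h6 : q i ≤ N * P₂ + (∑ j ∈ Finset.Icc 1 N, E j) / Tf := by linarith
    have := mul_le_mul_of_nonneg_left h6 hg.le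
    linarith
  have hle : ∑ i ∈ Finset.Icc 1 N, rate Tf γ (fun i => p i + (P₂ - P₁)) i ≤ f P₂ := by
    rw [hf P₂]
    refine le_csSup hbdd ⟨fun i => p i + (P₂ - P₁), pH, ?_, hC, hK, ?_, rfl⟩
    · intro i hi
      have := hA i hi
      exact ⟨this.1, by dsimp only; linarith⟩
    · have : ∑ i ∈ Finset.Icc 1 N, (p i + (P₂ - P₁) - pH i)
          = ∑ i ∈ Finset.Icc 1 N, (p i - pH i) + N * (P₂ - P₁) := by
        have h : ∀ i ∈ Finset.Icc 1 N, p i + (P₂ - P₁) - pH i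
            = (p i - pH i) + (P₂ - P₁) := fun i _ => by ring
        rw [Finset.sum_congr rfl h, Finset.sum_add_distrib]
        simp
        ring
      rw [this, mul_add, ← mul_assoc, one_div_mul_cancel hN0.ne']
      linarith
  refine lt_of_lt_of_le ?_ hle
  rw [hR]
  refine Finset.sum_lt_sum_of_nonempty ⟨1, Finset.mem_Icc.2 ⟨le_rfl, hN⟩⟩ fun i hi => ?_
  have hq : 0 ≤ p i := (hA i hi).1.trans (hA i hi).2
  have hg := hγ i hi
  unfold rate
  refine mul_lt_mul_of_pos_left ?_ (by positivity)
  refine Real.logb_lt_logb (by norm_num) (by positivity) ?_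
  have := mul_pos hg (sub_pos.2 hP₁₂)
  dsimp only
  linarith
end

section
/- Suppose E_i ≤ E_max for all i ≥ 2. For P ≥ 0 let f(P) be the supremum of Σ_{i=1}^N (T_f/2)·log₂(1 + γ_i p_i) over allocations (p, p_H) with 0 ≤ p_{H,i} ≤ p_i satisfying Causality, Capacity, and (1/N)·Σ_{i=1}^N (p_i − p_{H,i}) ≤ P; for b ≥ 0 let g(b) be the infimum of (1/N)·Σ_{i=1}^N (p_i − p_{H,i}) over allocations with 0 ≤ p_{H,i} ≤ p_i satisfying Causality, Capacity, and Σ_{i=1}^N (T_f/2)·log₂(1 + γ_i p_i) ≥ b. For every b with b ≥ f(0), if the infimum defining g(b) and the supremum defining f(g(b)) are attained by feasible allocations, then f(g(b)) = b. -/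
lemma bdd_aux (N : ℕ) (hN : 1 ≤ N) (Tf : ℝ) (hTf : 0 < Tf)
    (γ E : ℕ → ℝ) (hγ : ∀ i ∈ Finset.Icc 1 N, 0 < γ i) (P : ℝ) (p pH : ℕ → ℝ)
    (hA : Alloc N p pH) (hC : Causality N Tf E pH)
    (hP : (1 / (N : ℝ)) * ∑ i ∈ Finset.Icc 1 N, (p i - pH i) ≤ P) :
    ∑ i ∈ Finset.Icc 1 N, rate Tf γ p i ≤
      ∑ i ∈ Finset.Icc 1 N, Tf / 2 *
        (γ i * (N * P + (∑ i ∈ Finset.Icc 1 N, E i) / Tf) / Real.log 2) := by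
  have hN' : (0 : ℝ) < N := by exact_mod_cast hN
  have h1 : ∑ i ∈ Finset.Icc 1 N, (p i - pH i) ≤ N * P := by
    rw [one_div, inv_mul_le_iff₀ hN'] at hP
    exact hP
  have h2 : ∑ i ∈ Finset.Icc 1 N, pH i ≤ (∑ i ∈ Finset.Icc 1 N, E i) / Tf := by
    rw [le_div_iff₀ hTf, mul_comm, Finset.mul_sum]
    exact hC N (Finset.mem_Icc.2 ⟨hN, le_refl _⟩)
  have h3 : ∑ i ∈ Finset.Icc 1 N, p i ≤ N * P + (∑ i ∈ Finset.Icc 1 N, E i) / Tf := by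
    rw [Finset.sum_sub_distrib] at h1
    linarith
  have hp : ∀ i ∈ Finset.Icc 1 N, 0 ≤ p i := fun i hi => (hA i hi).1.trans (hA i hi).2
  have hl : 0 < Real.log 2 := Real.log_pos (by norm_num)
  apply Finset.sum_le_sum
  intro i hi
  have h4 : p i ≤ N * P + (∑ i ∈ Finset.Icc 1 N, E i) / Tf :=
    (Finset.single_le_sum hp hi).trans h3
  have h5 : 0 ≤ γ i * p i := mul_nonneg (hγ i hi).le (hp i hi)
  have h6 := Real.log_le_sub_one_of_pos (show 0 < 1 + γ i * p i by linarith)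
  have h7 := mul_le_mul_of_nonneg_left h4 (hγ i hi).le
  unfold rate Real.logb
  apply mul_le_mul_of_nonneg_left _ (by positivity)
  apply div_le_div_of_nonneg_right _ hl.le
  linarith

/-- for every `b ≥ f 0`, if the infimum defining `g b` and the supremum
defining `f (g b)` are attained by feasible allocations, then `f (g b) = b`. -/
theorem statement_2
    (N : ℕ) (hN : 1 ≤ N) (Tf : ℝ) (hTf : 0 < Tf)
    (γ E : ℕ → ℝ) (Emax : ℝ) (hEmax : 0 ≤ Emax)
    (hγ : ∀ i ∈ Finset.Icc 1 N, 0 < γ i)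
    (hE : ∀ i ∈ Finset.Icc 1 N, 0 ≤ E i)
    (hEcap : ∀ i ∈ Finset.Icc 2 N, E i ≤ Emax)
    (f g : ℝ → ℝ)
    (hf : ∀ P : ℝ, f P = sSup {t : ℝ | ∃ p pH : ℕ → ℝ,
      Alloc N p pH ∧ Causality N Tf E pH ∧ Capacity N Tf Emax E pH ∧
      (1 / (N : ℝ)) * ∑ i ∈ Finset.Icc 1 N, (p i - pH i) ≤ P ∧
      t = ∑ i ∈ Finset.Icc 1 N, rate Tf γ p i})
    (hg : ∀ b : ℝ, g b = sInf {v : ℝ | ∃ p pH : ℕ → ℝ,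
      Alloc N p pH ∧ Causality N Tf E pH ∧ Capacity N Tf Emax E pH ∧
      b ≤ ∑ i ∈ Finset.Icc 1 N, rate Tf γ p i ∧
      v = (1 / (N : ℝ)) * ∑ i ∈ Finset.Icc 1 N, (p i - pH i)})
    (b : ℝ) (hb : 0 ≤ b) (hbf0 : f 0 ≤ b)
    -- the infimum defining `g b` is attained by a feasible allocation
    (hattG : g b ∈ {v : ℝ | ∃ p pH : ℕ → ℝ,
      Alloc N p pH ∧ Causality N Tf E pH ∧ Capacity N Tf Emax E pH ∧
      b ≤ ∑ i ∈ Finset.Icc 1 N, rate Tf γ p i ∧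
      v = (1 / (N : ℝ)) * ∑ i ∈ Finset.Icc 1 N, (p i - pH i)})
    -- the supremum defining `f (g b)` is attained by a feasible allocation
    (hattF : f (g b) ∈ {t : ℝ | ∃ p pH : ℕ → ℝ,
      Alloc N p pH ∧ Causality N Tf E pH ∧ Capacity N Tf Emax E pH ∧
      (1 / (N : ℝ)) * ∑ i ∈ Finset.Icc 1 N, (p i - pH i) ≤ g b ∧
      t = ∑ i ∈ Finset.Icc 1 N, rate Tf γ p i}) :
    f (g b) = b := by
  have hN' : (0 : ℝ) < N := by exact_mod_cast hN
  apply le_antisymm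
  · by_contra hlt
    push Not at hlt
    obtain ⟨p, pH, hA, hC, hK, hP, ht⟩ := hattF
    have hbdd : ∀ q qH : ℕ → ℝ, Alloc N q qH → Causality N Tf E qH →
        Capacity N Tf Emax E qH → b ≤ ∑ i ∈ Finset.Icc 1 N, rate Tf γ q i →
        g b ≤ (1 / (N : ℝ)) * ∑ i ∈ Finset.Icc 1 N, (q i - qH i) := by
      intro q qH h1 h2 h3 h4
      rw [hg b]
      refine csInf_le ⟨0, ?_⟩ ⟨q, qH, h1, h2, h3, h4, rfl⟩
      rintro v ⟨r, rH, hr, -, -, -, rfl⟩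
      exact mul_nonneg (by positivity)
        (Finset.sum_nonneg fun i hi => sub_nonneg.2 (hr i hi).2)
    have hg0 : 0 ≤ g b := by
      obtain ⟨r, rH, hr, -, -, -, hv⟩ := hattG
      rw [hv]
      exact mul_nonneg (by positivity)
        (Finset.sum_nonneg fun i hi => sub_nonneg.2 (hr i hi).2)
    rcases hg0.eq_or_lt with h0 | hpos
    · rw [← h0] at hlt
      linarith
    have hp : ∀ i ∈ Finset.Icc 1 N, 0 ≤ p i := fun i hi => (hA i hi).1.trans (hA i hi).2
    have hcont : ContinuousAt (fun s : ℝ => ∑ i ∈ Finset.Icc 1 N,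
        rate Tf γ (fun j => p j - s * (p j - pH j)) i) 0 := by
      unfold rate Real.logb
      refine tendsto_finsetSum _ fun i hi => ?_
      have h5 : 0 ≤ γ i * p i := mul_nonneg (hγ i hi).le (hp i hi)
      have : ContinuousAt (fun s : ℝ => Tf / 2 *
          (Real.log (1 + γ i * (p i - s * (p i - pH i))) / Real.log 2)) 0 := by
        refine continuousAt_const.mul (ContinuousAt.div_const (ContinuousAt.log ?_ ?_) _)
        · fun_prop
        · simp only [zero_mul, sub_zero]
          positivity
      exact this
    have hev := hcont.eventually (lt_mem_nhds (a := b) (by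
      simp only [zero_mul, sub_zero]
      rw [← ht]; exact hlt))
    obtain ⟨ε, hε, hball⟩ := Metric.eventually_nhds_iff.1 hev
    have hs0 : 0 < min (ε / 2) 1 := lt_min (by linarith) one_pos
    have hs1 : min (ε / 2) 1 ≤ 1 := min_le_right _ _
    have hsε : min (ε / 2) 1 ≤ ε / 2 := min_le_left _ _
    generalize min (ε / 2) 1 = s at hs0 hs1 hsε
    have hr := @hball s (by
      rw [Real.dist_eq, sub_zero, abs_of_pos hs0]; linarith)
    have hfin := hbdd (fun j => p j - s * (p j - pH j)) pH (by
      intro i hi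
      have := hA i hi
      refine ⟨this.1, ?_⟩
      nlinarith) hC hK hr.le
    have heq : (1 / (N : ℝ)) * ∑ i ∈ Finset.Icc 1 N, (p i - s * (p i - pH i) - pH i)
        = (1 - s) * ((1 / (N : ℝ)) * ∑ i ∈ Finset.Icc 1 N, (p i - pH i)) := by
      rw [mul_left_comm, Finset.mul_sum (a := 1 - s)]
      congr 1
      exact Finset.sum_congr rfl fun i _ => by ring
    rw [heq] at hfin
    nlinarith
  · obtain ⟨p, pH, hA, hC, hK, hR, hv⟩ := hattG
    refine hR.trans ?_
    rw [hf (g b)]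
    refine le_csSup ⟨∑ i ∈ Finset.Icc 1 N, Tf / 2 * (γ i * (N * g b + (∑ i ∈ Finset.Icc 1 N, E i) / Tf) / Real.log 2), ?_⟩ ⟨p, pH, hA, hC, hK, hv.ge, rfl⟩
    rintro t ⟨q, qH, h1, h2, -, h4, rfl⟩
    exact bdd_aux N hN Tf hTf γ E hγ (g b) q qH h1 h2 h4
end

section
/- If E_i ≤ E_max for all i ∈ {2,…,N}, then the feasible set of the grid power minimization problem is nonempty: there exists an allocation (p, p_H) with 0 ≤ p_{H,i} ≤ p_i for all i satisfying the Causality, Capacity, and Data constraints. -/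
/-- Data constraints: `Σ_{i=k}^N rate_i ≥ Σ_{i=k}^N B_i` for `k = 1, …, N`. -/
def DataC (N : ℕ) (Tf : ℝ) (γ B p : ℕ → ℝ) : Prop :=
  ∀ k ∈ Finset.Icc 1 N, ∑ i ∈ Finset.Icc k N, B i ≤ ∑ i ∈ Finset.Icc k N, rate Tf γ p i

/-- if `E_i ≤ E_max` for all `i ∈ {2, …, N}`, the feasible set of the
grid power minimization problem is nonempty. -/
theorem statement_5
    (N : ℕ) (hN : 1 ≤ N) (Tf : ℝ) (hTf : 0 < Tf)
    (γ E B : ℕ → ℝ) (Emax : ℝ) (hEmax : 0 ≤ Emax)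
    (hγ : ∀ i ∈ Finset.Icc 1 N, 0 < γ i)
    (hE : ∀ i ∈ Finset.Icc 1 N, 0 ≤ E i)
    (hB : ∀ i ∈ Finset.Icc 1 N, 0 ≤ B i)
    (hEcap : ∀ i ∈ Finset.Icc 2 N, E i ≤ Emax) :
    ∃ p pH : ℕ → ℝ, Alloc N p pH ∧ Causality N Tf E pH ∧
      Capacity N Tf Emax E pH ∧ DataC N Tf γ B p := by
  have hs : ∀ k, ∑ i ∈ Finset.Icc 1 k, Tf * (E i / Tf) = ∑ i ∈ Finset.Icc 1 k, E i := by
    intro k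
    refine Finset.sum_congr rfl fun i _ => ?_
    field_simp
  refine ⟨fun i => E i / Tf + (2:ℝ) ^ (2 * B i / Tf) / γ i, fun i => E i / Tf, ?_, ?_, ?_, ?_⟩
  · intro i hi
    have h1 := hγ i hi
    have h2 := hE i hi
    refine ⟨by positivity, ?_⟩
    have : 0 ≤ (2:ℝ) ^ (2 * B i / Tf) / γ i := by positivity
    simpa using this
  · intro k _
    exact (hs k).le
  · intro k hk
    rw [Finset.mem_Icc] at hk
    have h := hEcap (k + 1) (by rw [Finset.mem_Icc]; omega)
    simp only [hs k]
    rw [Finset.sum_Icc_succ_top (by omega)]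
    linarith
  · intro k hk
    rw [Finset.mem_Icc] at hk
    refine Finset.sum_le_sum fun i hi => ?_
    rw [Finset.mem_Icc] at hi
    have hi' : i ∈ Finset.Icc 1 N := by rw [Finset.mem_Icc]; omega
    have h1 := hγ i hi'
    have h2 := hE i hi'
    have h3 : (0:ℝ) < 2 ^ (2 * B i / Tf) := by positivity
    have h4 : 0 ≤ γ i * (E i / Tf) := by positivity
    have h5 : (2:ℝ) ^ (2 * B i / Tf) ≤ 1 + γ i * (E i / Tf + (2:ℝ) ^ (2 * B i / Tf) / γ i) := by
      rw [mul_add, mul_div_cancel₀ _ h1.ne']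
      linarith
    have h6 := Real.logb_le_logb_of_le (b := 2) (by norm_num) h3 h5
    rw [Real.logb_rpow (by norm_num) (by norm_num)] at h6
    unfold rate
    calc B i = Tf / 2 * (2 * B i / Tf) := by field_simp
      _ ≤ _ := mul_le_mul_of_nonneg_left h6 (by positivity)
end

section
/- If the feasible set of the grid power minimization problem is nonempty, then the infimum of the grid energy Σ_{i=1}^N T_f·(p_i − p_{H,i}) over all feasible allocations is attained: there exists a feasible allocation (p*, p*_H) whose grid energy equals this infimum. -/
/-- A feasible allocation for the grid power minimization problem. -/
def Feasible (N : ℕ) (Tf Emax : ℝ) (γ E B p pH : ℕ → ℝ) : Prop :=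
  Alloc N p pH ∧ Causality N Tf E pH ∧ Capacity N Tf Emax E pH ∧ DataC N Tf γ B p

/-- Grid energy `Σ_{i=1}^N T_f (p_i − p_{H,i})` of an allocation. -/
def gridEnergy (N : ℕ) (Tf : ℝ) (p pH : ℕ → ℝ) : ℝ :=
  ∑ i ∈ Finset.Icc 1 N, Tf * (p i - pH i)

/-- A continuous version of the rate. -/
noncomputable def rateC (Tf : ℝ) (γ p : ℕ → ℝ) (i : ℕ) : ℝ :=
  Tf / 2 * (Real.log (max 1 (1 + γ i * p i)) / Real.log 2)

lemma rateC_eq (Tf : ℝ) (γ p : ℕ → ℝ) (i : ℕ) (h1 : 0 ≤ γ i) (h2 : 0 ≤ p i) :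
    rate Tf γ p i = rateC Tf γ p i := by
  have h := mul_nonneg h1 h2
  unfold rate rateC Real.logb
  rw [max_eq_right (by linarith)]

lemma rateC_cont (Tf : ℝ) (γ : ℕ → ℝ) (i : ℕ) :
    Continuous (fun x : (ℕ → ℝ) × (ℕ → ℝ) => rateC Tf γ x.1 i) := by
  unfold rateC
  refine continuous_const.mul (Continuous.div_const (Continuous.log (by fun_prop) ?_) _)
  intro x
  have : (1:ℝ) ≤ max 1 (1 + γ i * x.1 i) := le_max_left _ _
  linarith

lemma dataC_iff (N : ℕ) (Tf : ℝ) (γ B p : ℕ → ℝ)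
    (hγ : ∀ i ∈ Finset.Icc 1 N, 0 < γ i) (hp : ∀ i ∈ Finset.Icc 1 N, 0 ≤ p i) :
    DataC N Tf γ B p ↔
    ∀ k ∈ Finset.Icc 1 N, ∑ i ∈ Finset.Icc k N, B i ≤ ∑ i ∈ Finset.Icc k N, rateC Tf γ p i := by
  unfold DataC
  refine forall₂_congr fun k hk => ?_
  have : ∑ i ∈ Finset.Icc k N, rate Tf γ p i = ∑ i ∈ Finset.Icc k N, rateC Tf γ p i := by
    refine Finset.sum_congr rfl fun i hi => ?_
    have : i ∈ Finset.Icc 1 N := by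
      simp only [Finset.mem_Icc] at *; omega
    exact rateC_eq _ _ _ _ (hγ i this).le (hp i this)
  rw [this]

lemma feasible_closed (N : ℕ) (Tf Emax : ℝ) (γ E B : ℕ → ℝ)
    (hγ : ∀ i ∈ Finset.Icc 1 N, 0 < γ i) :
    IsClosed {x : (ℕ → ℝ) × (ℕ → ℝ) | Feasible N Tf Emax γ E B x.1 x.2} := by
  have : {x : (ℕ → ℝ) × (ℕ → ℝ) | Feasible N Tf Emax γ E B x.1 x.2} =
      {x | Alloc N x.1 x.2} ∩ ({x | Causality N Tf E x.2} ∩ ({x | Capacity N Tf Emax E x.2} ∩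
        {x | ∀ k ∈ Finset.Icc 1 N,
          ∑ i ∈ Finset.Icc k N, B i ≤ ∑ i ∈ Finset.Icc k N, rateC Tf γ x.1 i})) := by
    ext x
    simp only [Feasible, Set.mem_inter_iff, Set.mem_ofPred_eq]
    refine and_congr_right fun ha => ?_
    rw [dataC_iff N Tf γ B x.1 hγ (fun i hi => (ha i hi).1.trans (ha i hi).2)]
  rw [this]
  refine IsClosed.inter ?_ (IsClosed.inter ?_ (IsClosed.inter ?_ ?_))
  · simp only [Alloc, Set.ofPred_forall]
    refine isClosed_iInter fun i => isClosed_iInter fun _ => ?_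
    exact (isClosed_le (f := fun _ : (ℕ → ℝ) × (ℕ → ℝ) => (0:ℝ)) (g := fun x => x.2 i)
      (by fun_prop) (by fun_prop)).inter
      (isClosed_le (f := fun x : (ℕ → ℝ) × (ℕ → ℝ) => x.2 i) (g := fun x => x.1 i)
      (by fun_prop) (by fun_prop))
  · simp only [Causality, Set.ofPred_forall]
    exact isClosed_iInter fun i => isClosed_iInter fun _ =>
      isClosed_le (by fun_prop) (by fun_prop)
  · simp only [Capacity, Set.ofPred_forall]
    exact isClosed_iInter fun i => isClosed_iInter fun _ =>
      isClosed_le (by fun_prop) (by fun_prop)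
  · simp only [Set.ofPred_forall]
    exact isClosed_iInter fun i => isClosed_iInter fun _ =>
      isClosed_le (by fun_prop) (continuous_finsetSum _ fun j _ => rateC_cont Tf γ j)

/-- Truncation to the relevant frames. -/
noncomputable def trunc (N : ℕ) (p : ℕ → ℝ) (i : ℕ) : ℝ := if i ∈ Finset.Icc 1 N then p i else 0

lemma trunc_eq {N : ℕ} (p : ℕ → ℝ) {i : ℕ} (h : i ∈ Finset.Icc 1 N) : trunc N p i = p i :=
  if_pos h

lemma feasible_trunc {N : ℕ} {Tf Emax : ℝ} {γ E B p pH : ℕ → ℝ}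
    (h : Feasible N Tf Emax γ E B p pH) :
    Feasible N Tf Emax γ E B (trunc N p) (trunc N pH) := by
  obtain ⟨h1, h2, h3, h4⟩ := h
  refine ⟨fun i hi => ?_, fun k hk => ?_, fun k hk => ?_, fun k hk => ?_⟩
  · rw [trunc_eq _ hi, trunc_eq _ hi]; exact h1 i hi
  · rw [Finset.sum_congr rfl (g := fun i => Tf * pH i)]
    · exact h2 k hk
    · intro i hi
      rw [trunc_eq]
      simp only [Finset.mem_Icc] at *; omega
  · rw [Finset.sum_congr rfl (g := fun i => Tf * pH i) (s₁ := Finset.Icc 1 k)]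
    · exact h3 k hk
    · intro i hi
      rw [trunc_eq]
      simp only [Finset.mem_Icc] at *; omega
  · rw [Finset.sum_congr rfl (g := fun i => rate Tf γ p i) (f := fun i => rate Tf γ (trunc N p) i)]
    · exact h4 k hk
    · intro i hi
      unfold rate
      rw [trunc_eq]
      simp only [Finset.mem_Icc] at *; omega

lemma grid_trunc (N : ℕ) (Tf : ℝ) (p pH : ℕ → ℝ) :
    gridEnergy N Tf (trunc N p) (trunc N pH) = gridEnergy N Tf p pH :=
  Finset.sum_congr rfl fun i hi => by rw [trunc_eq _ hi, trunc_eq _ hi]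

lemma feasible_bound {N : ℕ} (hN : 1 ≤ N) {Tf Emax : ℝ} (hTf : 0 < Tf) {γ E B p pH : ℕ → ℝ}
    (h : Feasible N Tf Emax γ E B p pH) {G : ℝ} (hG : gridEnergy N Tf p pH ≤ G)
    {i : ℕ} (hi : i ∈ Finset.Icc 1 N) : p i ≤ (G + ∑ i ∈ Finset.Icc 1 N, E i) / Tf := by
  obtain ⟨h1, h2, -, -⟩ := h
  have h2 := h2 N (by simp [hN])
  have e : gridEnergy N Tf p pH + ∑ i ∈ Finset.Icc 1 N, Tf * pH i
      = ∑ i ∈ Finset.Icc 1 N, Tf * p i := by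
    unfold gridEnergy
    rw [← Finset.sum_add_distrib]
    exact Finset.sum_congr rfl fun i _ => by ring
  have h3 : Tf * p i ≤ ∑ i ∈ Finset.Icc 1 N, Tf * p i :=
    Finset.single_le_sum (f := fun i => Tf * p i)
      (fun j hj => mul_nonneg hTf.le ((h1 j hj).1.trans (h1 j hj).2)) hi
  rw [le_div_iff₀ hTf]
  linarith

/-- if the feasible set is nonempty, the infimum of the grid energy over
feasible allocations is attained by some feasible allocation. -/
theorem statement_6
    (N : ℕ) (hN : 1 ≤ N) (Tf : ℝ) (hTf : 0 < Tf)
    (γ E B : ℕ → ℝ) (Emax : ℝ) (hEmax : 0 ≤ Emax)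
    (hγ : ∀ i ∈ Finset.Icc 1 N, 0 < γ i)
    (hE : ∀ i ∈ Finset.Icc 1 N, 0 ≤ E i)
    (hB : ∀ i ∈ Finset.Icc 1 N, 0 ≤ B i)
    (hfeas : ∃ p pH : ℕ → ℝ, Feasible N Tf Emax γ E B p pH) :
    ∃ pstar pHstar : ℕ → ℝ, Feasible N Tf Emax γ E B pstar pHstar ∧
      gridEnergy N Tf pstar pHstar =
        sInf {v : ℝ | ∃ p pH : ℕ → ℝ, Feasible N Tf Emax γ E B p pH ∧
          v = gridEnergy N Tf p pH} := by
  obtain ⟨p0, pH0, h0⟩ := hfeas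
  set G := gridEnergy N Tf p0 pH0 with hG
  set M := (G + ∑ i ∈ Finset.Icc 1 N, E i) / Tf with hM
  have hM0 : 0 ≤ M := by
    have h1 : 1 ∈ Finset.Icc 1 N := by simp [hN]
    exact ((h0.1 1 h1).1.trans (h0.1 1 h1).2).trans (feasible_bound hN hTf h0 le_rfl h1)
  let K : Set ((ℕ → ℝ) × (ℕ → ℝ)) :=
    (Set.univ.pi fun _ => Set.Icc 0 M) ×ˢ (Set.univ.pi fun _ => Set.Icc 0 M)
  have hK : IsCompact K :=
    (isCompact_univ_pi fun _ => isCompact_Icc).prod (isCompact_univ_pi fun _ => isCompact_Icc)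
  have key : ∀ p pH, Feasible N Tf Emax γ E B p pH → gridEnergy N Tf p pH ≤ G →
      (trunc N p, trunc N pH) ∈ K := by
    intro p pH h hg
    refine ⟨fun i _ => ?_, fun i _ => ?_⟩ <;> by_cases hi : i ∈ Finset.Icc 1 N
    · have a := h.1 i hi
      have b := feasible_bound hN hTf h hg hi
      simp only [trunc_eq _ hi]
      exact ⟨a.1.trans a.2, b⟩
    · simp only [trunc, if_neg hi]
      exact ⟨le_rfl, hM0⟩
    · have a := h.1 i hi
      have b := feasible_bound hN hTf h hg hi
      simp only [trunc_eq _ hi]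
      exact ⟨a.1, a.2.trans b⟩
    · simp only [trunc, if_neg hi]
      exact ⟨le_rfl, hM0⟩
  have hS := hK.inter_right (feasible_closed N Tf Emax γ E B hγ)
  have hc : Continuous (fun x : (ℕ → ℝ) × (ℕ → ℝ) => gridEnergy N Tf x.1 x.2) := by
    unfold gridEnergy; fun_prop
  obtain ⟨x, hx, hmin⟩ := hS.exists_isMinOn
    ⟨_, key p0 pH0 h0 le_rfl, feasible_trunc h0⟩ hc.continuousOn
  have hmin' : ∀ p pH, Feasible N Tf Emax γ E B p pH → gridEnergy N Tf p pH ≤ G →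
      gridEnergy N Tf x.1 x.2 ≤ gridEnergy N Tf p pH := by
    intro p pH h hg
    rw [← grid_trunc N Tf p pH]
    exact hmin (a := (trunc N p, trunc N pH)) ⟨key p pH h hg, feasible_trunc h⟩
  have hl : IsLeast {v : ℝ | ∃ p pH : ℕ → ℝ, Feasible N Tf Emax γ E B p pH ∧
          v = gridEnergy N Tf p pH} (gridEnergy N Tf x.1 x.2) := by
    refine ⟨⟨x.1, x.2, hx.2, rfl⟩, ?_⟩
    rintro v ⟨p, pH, h, rfl⟩
    rcases le_total (gridEnergy N Tf p pH) G with hg | hg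
    · exact hmin' p pH h hg
    · exact (hmin' p0 pH0 h0 le_rfl).trans hg
  exact ⟨x.1, x.2, hx.2, hl.csInf_eq.symm⟩
end

section
/- Suppose there is no harvested energy (E_i = 0 for all i, so Causality forces p_{H,i} = 0 and the problem is to minimize the total energy Σ_{i=1}^N T_f·p_i over p ∈ ℝ^N with p_i ≥ 0 satisfying the Data constraints). If p* is a minimizer of this problem, then there exist water levels 0 ≤ ν_1 ≤ ν_2 ≤ … ≤ ν_N such that p*_i = max(ν_i − 1/γ_i, 0) for every i, and for every k ∈ {1,…,N−1}: if ν_k < ν_{k+1}, then the cumulative data constraint is tight at k, i.e. Σ_{i=1}^k (T_f/2)·log₂(1 + γ_i p*_i) = Σ_{i=1}^k B_i. -/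
lemma aux_t (Tf a δ : ℝ) (hTf : 0 < Tf) (ha : 1 < a) (hδ : 0 < δ) :
    ∃ t : ℝ, 1 < t ∧ t < a ∧ 0 < Tf / 2 * Real.logb 2 t ∧ Tf / 2 * Real.logb 2 t ≤ δ := by
  have h2 : (1:ℝ) < 2 ^ (2 * δ / Tf) := Real.one_lt_rpow (by norm_num) (by positivity)
  obtain ⟨t, h1, ht⟩ := exists_between (lt_min ha h2)
  have hta := lt_of_lt_of_le ht (min_le_left _ _)
  have htb := lt_of_lt_of_le ht (min_le_right _ _)
  refine ⟨t, h1, hta, ?_, ?_⟩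
  · have := Real.logb_pos (b := 2) (by norm_num) h1
    positivity
  · have h3 : Real.logb 2 t < 2 * δ / Tf :=
      (Real.logb_lt_iff_lt_rpow (by norm_num) (by linarith)).2 htb
    rw [lt_div_iff₀ hTf] at h3
    linarith

lemma aux_red (N : ℕ) (Tf : ℝ) (hTf : 0 < Tf) (γ B : ℕ → ℝ)
    (hγ : ∀ i ∈ Finset.Icc 1 N, 0 < γ i) (p : ℕ → ℝ)
    (hp : ∀ i ∈ Finset.Icc 1 N, 0 ≤ p i) (hD : DataC N Tf γ B p)
    (hopt : ∀ q : ℕ → ℝ, (∀ i ∈ Finset.Icc 1 N, 0 ≤ q i) → DataC N Tf γ B q →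
      ∑ i ∈ Finset.Icc 1 N, Tf * p i ≤ ∑ i ∈ Finset.Icc 1 N, Tf * q i)
    (j : ℕ) (hj : j ∈ Finset.Icc 1 N) (hpj : 0 < p j) (δ : ℝ) (hδ : 0 < δ)
    (hs : ∀ k ∈ Finset.Icc 1 N, k ≤ j →
      ∑ i ∈ Finset.Icc k N, B i + δ ≤ ∑ i ∈ Finset.Icc k N, rate Tf γ p i) : False := by
  have hgj := hγ j hj
  obtain ⟨t, h1, hta, hr0, hr⟩ := aux_t Tf (1 + γ j * p j) δ hTf
    (by have := mul_pos hgj hpj; linarith) hδ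
  set r := Tf / 2 * Real.logb 2 t with hrdef
  have ht0 : 0 < t := by linarith
  let q : ℕ → ℝ := fun m => if m = j then ((1 + γ j * p j) / t - 1) / γ j else p m
  have hqj : q j < p j := by
    simp only [q, if_true]
    rw [div_lt_iff₀ hgj]
    have : (1 + γ j * p j) / t < 1 + γ j * p j := div_lt_self (by linarith) h1
    linarith
  have hq0 : ∀ i ∈ Finset.Icc 1 N, 0 ≤ q i := by
    intro i hi
    by_cases h : i = j
    · simp only [q, h, if_true]
      apply div_nonneg _ hgj.le
      have : 1 ≤ (1 + γ j * p j) / t := by rw [le_div_iff₀ ht0]; linarith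
      linarith
    · simp only [q, h, if_false]; exact hp i hi
  have hrate : ∀ m, rate Tf γ q m = rate Tf γ p m - (if m = j then r else 0) := by
    intro m
    by_cases h : m = j
    · subst h
      simp only [rate, q, if_true]
      have e : 1 + γ m * (((1 + γ m * p m) / t - 1) / γ m) = (1 + γ m * p m) / t := by
        field_simp; ring
      rw [e, Real.logb_div (by linarith) ht0.ne', hrdef]; ring
    · simp [rate, q, h]
  have hDq : DataC N Tf γ B q := by
    intro k hk
    simp only [hrate, Finset.sum_sub_distrib, Finset.sum_ite_eq']
    by_cases h : k ≤ j
    · have := hs k hk h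
      split_ifs <;> linarith
    · have := hD k hk
      rw [if_neg (by simp [h])]; linarith
  have hlt : ∑ i ∈ Finset.Icc 1 N, Tf * q i < ∑ i ∈ Finset.Icc 1 N, Tf * p i := by
    apply Finset.sum_lt_sum
    · intro i hi
      by_cases h : i = j
      · rw [h]; exact mul_le_mul_of_nonneg_left hqj.le hTf.le
      · simp [q, h]
    · exact ⟨j, hj, mul_lt_mul_of_pos_left hqj hTf⟩
  exact absurd (hopt q hq0 hDq) (not_le.2 hlt)

lemma aux_exch (N : ℕ) (Tf : ℝ) (hTf : 0 < Tf) (γ B : ℕ → ℝ)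
    (hγ : ∀ i ∈ Finset.Icc 1 N, 0 < γ i) (p : ℕ → ℝ)
    (hp : ∀ i ∈ Finset.Icc 1 N, 0 ≤ p i) (hD : DataC N Tf γ B p)
    (hopt : ∀ q : ℕ → ℝ, (∀ i ∈ Finset.Icc 1 N, 0 ≤ q i) → DataC N Tf γ B q →
      ∑ i ∈ Finset.Icc 1 N, Tf * p i ≤ ∑ i ∈ Finset.Icc 1 N, Tf * q i)
    (i j : ℕ) (hi : i ∈ Finset.Icc 1 N) (hj : j ∈ Finset.Icc 1 N)
    (hpj : 0 < p j) (hu : p i + 1 / γ i < p j + 1 / γ j) (δ : ℝ) (hδ : 0 < δ)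
    (hs : ∀ k ∈ Finset.Icc 1 N, i < k → k ≤ j →
      ∑ i ∈ Finset.Icc k N, B i + δ ≤ ∑ i ∈ Finset.Icc k N, rate Tf γ p i) : False := by
  have hij : i ≠ j := by rintro rfl; exact lt_irrefl _ hu
  have hgj := hγ j hj
  have hgi := hγ i hi
  have hpi := hp i hi
  have hui : 0 < p i + 1 / γ i := by positivity
  have huj : 0 < p j + 1 / γ j := by positivity
  obtain ⟨t, h1, hta, hr0, hr⟩ := aux_t Tf
    (min (1 + γ j * p j) ((p j + 1 / γ j) / (p i + 1 / γ i))) δ hTf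
    (lt_min (by have := mul_pos hgj hpj; linarith) (by rwa [one_lt_div hui])) hδ
  have hta1 := lt_of_lt_of_le hta (min_le_left _ _)
  have hta2 := lt_of_lt_of_le hta (min_le_right _ _)
  rw [lt_div_iff₀ hui] at hta2
  set r := Tf / 2 * Real.logb 2 t with hrdef
  have ht0 : 0 < t := by linarith
  let x := t * (p i + 1 / γ i) - 1 / γ i
  let y := (p j + 1 / γ j) / t - 1 / γ j
  let q : ℕ → ℝ := fun m => if m = j then y else if m = i then x else p m
  have hx : 0 ≤ x := by
    have : p i + 1 / γ i ≤ t * (p i + 1 / γ i) := le_mul_of_one_le_left hui.le h1.le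
    simp only [x]; linarith
  have hy : 0 ≤ y := by
    have : 1 / γ j ≤ (p j + 1 / γ j) / t := by
      rw [le_div_iff₀ ht0, one_div, inv_mul_le_iff₀ hgj]
      have : γ j * (p j + (γ j)⁻¹) = 1 + γ j * p j := by field_simp; ring
      linarith
    simp only [y]; linarith
  have hxy : x + y < p i + p j := by
    have h3 : 0 < (t - 1) * ((p j + 1 / γ j) / t - (p i + 1 / γ i)) := by
      apply mul_pos (by linarith)
      rw [sub_pos, lt_div_iff₀ ht0]; linarith
    have h4 : t * ((p j + 1 / γ j) / t) = p j + 1 / γ j := by field_simp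
    simp only [x, y]
    nlinarith
  have hq0 : ∀ m ∈ Finset.Icc 1 N, 0 ≤ q m := by
    intro m hm
    simp only [q]
    split_ifs
    · exact hy
    · exact hx
    · exact hp m hm
  have hrate : ∀ m, rate Tf γ q m =
      rate Tf γ p m + (if m = i then r else 0) - (if m = j then r else 0) := by
    intro m
    by_cases h : m = j
    · subst h
      simp only [rate, q, if_true, if_neg hij.symm, y]
      have e : 1 + γ m * ((p m + 1 / γ m) / t - 1 / γ m) = (1 + γ m * p m) / t := by
        field_simp; ring
      rw [e, Real.logb_div (by linarith) ht0.ne', hrdef]; ring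
    · by_cases h' : m = i
      · subst h'
        simp only [rate, q, if_true, if_neg hij, x]
        have e : 1 + γ m * (t * (p m + 1 / γ m) - 1 / γ m) = t * (1 + γ m * p m) := by
          field_simp; ring
        have := mul_nonneg hgi.le hpi
        rw [e, Real.logb_mul ht0.ne' (by linarith), hrdef]; ring
      · simp [rate, q, h, h']
  have hDq : DataC N Tf γ B q := by
    intro k hk
    have h0 := hD k hk
    have hi2 := (Finset.mem_Icc.1 hi).2
    have hj2 := (Finset.mem_Icc.1 hj).2
    simp only [hrate, Finset.sum_sub_distrib, Finset.sum_add_distrib, Finset.sum_ite_eq',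
      Finset.mem_Icc, hi2, hj2, and_true]
    by_cases h : k ≤ j
    · by_cases h' : k ≤ i
      · simp only [h, h', if_true]; linarith
      · have := hs k hk (not_le.1 h') h
        simp only [h, h', if_true, if_false]; linarith
    · simp only [h, if_false]
      split_ifs <;> linarith
  have hqs : ∀ m, q m = p m + (if m = i then x - p i else 0) + (if m = j then y - p j else 0) := by
    intro m
    by_cases h : m = j
    · subst h; simp [q, hij.symm]
    · by_cases h' : m = i
      · subst h'; simp [q, hij]
      · simp [q, h, h']
  have := hopt q hq0 hDq
  rw [← Finset.mul_sum, ← Finset.mul_sum] at this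
  have := le_of_mul_le_mul_left this hTf
  simp only [hqs, Finset.sum_add_distrib, Finset.sum_ite_eq', hi, hj, if_true] at this
  linarith

/-- grid power only, Proposition 2: if `p*` minimizes the total energy
`Σ_{i=1}^N T_f p_i` over nonnegative `p` satisfying the data constraints, then `p*`
is given by nonnegative, monotonically non-decreasing water levels
`ν_1 ≤ ν_2 ≤ … ≤ ν_N` via `p*_i = [ν_i − 1/γ_i]⁺`, and the water level can increase
from frame `k` to `k+1` only if the cumulative data constraint is tight at `k`. -/
theorem statement_7
    (N : ℕ) (hN : 1 ≤ N) (Tf : ℝ) (hTf : 0 < Tf)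
    (γ B : ℕ → ℝ)
    (hγ : ∀ i ∈ Finset.Icc 1 N, 0 < γ i)
    (hB : ∀ i ∈ Finset.Icc 1 N, 0 ≤ B i)
    (pstar : ℕ → ℝ)
    (hfeas : (∀ i ∈ Finset.Icc 1 N, 0 ≤ pstar i) ∧ DataC N Tf γ B pstar)
    (hopt : ∀ p : ℕ → ℝ, (∀ i ∈ Finset.Icc 1 N, 0 ≤ p i) → DataC N Tf γ B p →
      ∑ i ∈ Finset.Icc 1 N, Tf * pstar i ≤ ∑ i ∈ Finset.Icc 1 N, Tf * p i) :
    ∃ ν : ℕ → ℝ,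
      (∀ k ∈ Finset.Icc 1 N, 0 ≤ ν k) ∧
      (∀ k ∈ Finset.Icc 1 (N - 1), ν k ≤ ν (k + 1)) ∧
      (∀ i ∈ Finset.Icc 1 N, pstar i = max (ν i - 1 / γ i) 0) ∧
      (∀ k ∈ Finset.Icc 1 (N - 1), ν k < ν (k + 1) →
        ∑ i ∈ Finset.Icc 1 k, rate Tf γ pstar i = ∑ i ∈ Finset.Icc 1 k, B i) := by
  obtain ⟨hp, hD⟩ := hfeas
  have hrn : ∀ i ∈ Finset.Icc 1 N, 0 ≤ rate Tf γ pstar i := by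
    intro i hi
    have := mul_nonneg (hγ i hi).le (hp i hi)
    have := Real.logb_nonneg (b := 2) (x := 1 + γ i * pstar i) (by norm_num) (by linarith)
    unfold rate; positivity
  have hr0 : ∀ i, pstar i = 0 → rate Tf γ pstar i = 0 := by
    intro i h; simp [rate, h]
  have hsub : ∀ k, 1 ≤ k → Finset.Icc k N ⊆ Finset.Icc 1 N := fun k hk =>
    Finset.Icc_subset_Icc_left hk
  -- the key tightness fact
  have key : ∀ k ∈ Finset.Icc 1 N, 
      ∑ i ∈ Finset.Icc k N, B i < ∑ i ∈ Finset.Icc k N, rate Tf γ pstar i →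
      ∃ j ∈ Finset.Icc k N, 0 < pstar j ∧ ∀ m ∈ Finset.Icc k N, m ≤ j →
        ∑ i ∈ Finset.Icc m N, B i + (∑ i ∈ Finset.Icc k N, rate Tf γ pstar i
          - ∑ i ∈ Finset.Icc k N, B i) ≤ ∑ i ∈ Finset.Icc m N, rate Tf γ pstar i := by
    intro k hk hlt
    have hk1 := (Finset.mem_Icc.1 hk).1
    have hex : ∃ j, j ∈ Finset.Icc k N ∧ 0 < pstar j := by
      by_contra hcon
      push Not at hcon
      have h1 : ∑ i ∈ Finset.Icc k N, rate Tf γ pstar i = 0 :=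
        Finset.sum_eq_zero fun i hi => hr0 i (le_antisymm (hcon i hi) (hp i (hsub k hk1 hi)))
      have h2 : 0 ≤ ∑ i ∈ Finset.Icc k N, B i :=
        Finset.sum_nonneg fun i hi => hB i (hsub k hk1 hi)
      linarith
    classical
    obtain ⟨hj, hjp⟩ := Nat.find_spec hex
    refine ⟨Nat.find hex, hj, hjp, ?_⟩
    intro m hm hmj
    have hkm := (Finset.mem_Icc.1 hm).1
    have h1 : ∑ i ∈ Finset.Icc m N, rate Tf γ pstar i = ∑ i ∈ Finset.Icc k N, rate Tf γ pstar i := by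
      apply Finset.sum_subset (Finset.Icc_subset_Icc_left hkm)
      intro i hi hi'
      apply hr0
      have him : i < Nat.find hex := by
        simp only [Finset.mem_Icc] at hi hi'; omega
      have := Nat.find_min hex him
      have h3 : ¬ 0 < pstar i := fun h => this ⟨hi, h⟩
      exact le_antisymm (not_lt.1 h3) (hp i (hsub k hk1 hi))
    have h2 : ∑ i ∈ Finset.Icc m N, B i ≤ ∑ i ∈ Finset.Icc k N, B i :=
      Finset.sum_le_sum_of_subset_of_nonneg (Finset.Icc_subset_Icc_left hkm)
        fun i hi _ => hB i (hsub k hk1 hi)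
    linarith
  have htot : ∑ i ∈ Finset.Icc 1 N, rate Tf γ pstar i = ∑ i ∈ Finset.Icc 1 N, B i := by
    have h1 : 1 ∈ Finset.Icc 1 N := Finset.mem_Icc.2 ⟨le_rfl, hN⟩
    by_contra hne
    have hlt := lt_of_le_of_ne (hD 1 h1) (Ne.symm hne)
    obtain ⟨j, hj, hjp, hs⟩ := key 1 h1 hlt
    exact aux_red N Tf hTf γ B hγ pstar hp hD hopt j hj hjp _ (sub_pos.2 hlt) hs
  have hmono : ∀ i ∈ Finset.Icc 1 N, ∀ j ∈ Finset.Icc i N, 0 < pstar i →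
      pstar i + 1 / γ i ≤ pstar j + 1 / γ j := by
    intro i hi j hj hpi
    by_contra hcon
    have hij := (Finset.mem_Icc.1 hj).1
    refine aux_exch N Tf hTf γ B hγ pstar hp hD hopt j i
      (hsub i (Finset.mem_Icc.1 hi).1 hj) hi hpi (not_le.1 hcon) 1 one_pos ?_
    intro k _ h1 h2
    omega
  have hmin : ∀ i, ∃ f : ℕ, i ∈ Finset.Icc 1 N → f ∈ Finset.Icc i N ∧
      ∀ j ∈ Finset.Icc i N, pstar f + 1 / γ f ≤ pstar j + 1 / γ j := by
    intro i
    by_cases hi : i ∈ Finset.Icc 1 N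
    · obtain ⟨f, hf, hf'⟩ := Finset.exists_min_image (Finset.Icc i N)
        (fun m => pstar m + 1 / γ m) ⟨i, Finset.mem_Icc.2 ⟨le_rfl, (Finset.mem_Icc.1 hi).2⟩⟩
      exact ⟨f, fun _ => ⟨hf, hf'⟩⟩
    · exact ⟨0, fun h => absurd h hi⟩
  choose f hf using hmin
  have hself : ∀ i ∈ Finset.Icc 1 N, i ∈ Finset.Icc i N := fun i hi =>
    Finset.mem_Icc.2 ⟨le_rfl, (Finset.mem_Icc.1 hi).2⟩
  refine ⟨fun i => pstar (f i) + 1 / γ (f i), ?_, ?_, ?_, ?_⟩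
  · intro k hk
    have h1 := hsub k (Finset.mem_Icc.1 hk).1 (hf k hk).1
    have := hp _ h1
    have := hγ _ h1
    positivity
  · intro k hk
    rw [Finset.mem_Icc] at hk
    have hk0 : k ∈ Finset.Icc 1 N := Finset.mem_Icc.2 (by omega)
    have hk1 : k + 1 ∈ Finset.Icc 1 N := Finset.mem_Icc.2 (by omega)
    exact (hf k hk0).2 _ (Finset.Icc_subset_Icc_left (by omega) (hf _ hk1).1)
  · intro i hi
    have hle := (hf i hi).2 i (hself i hi)
    rcases (hp i hi).lt_or_eq with h | h
    · have := hmono i hi _ (hf i hi).1 h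
      rw [max_eq_left] <;> linarith
    · rw [max_eq_right] <;> linarith
  · intro k hk hlt
    rw [Finset.mem_Icc] at hk
    have hk0 : k ∈ Finset.Icc 1 N := Finset.mem_Icc.2 (by omega)
    have hk1 : k + 1 ∈ Finset.Icc 1 N := Finset.mem_Icc.2 (by omega)
    have hfk : f k = k := by
      by_contra hne
      have h1 := (hf k hk0).1
      have := (hf _ hk1).2 (f k) (by rw [Finset.mem_Icc] at h1 ⊢; omega)
      linarith
    simp only [hfk] at hlt
    have htight : ∑ i ∈ Finset.Icc (k+1) N, rate Tf γ pstar i = ∑ i ∈ Finset.Icc (k+1) N, B i := by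
      by_contra hne
      have hlt' := lt_of_le_of_ne (hD _ hk1) (Ne.symm hne)
      obtain ⟨j, hj, hjp, hs⟩ := key _ hk1 hlt'
      refine aux_exch N Tf hTf γ B hγ pstar hp hD hopt k j hk0 (hsub _ (by omega) hj) hjp
        (lt_of_lt_of_le hlt ((hf _ hk1).2 j hj)) _ (sub_pos.2 hlt') ?_
      intro m hm h1 h2
      exact hs m (by rw [Finset.mem_Icc] at hm ⊢; omega) h2
    have hsplit : ∀ g : ℕ → ℝ, ∑ i ∈ Finset.Icc 1 N, g i =
        ∑ i ∈ Finset.Icc 1 k, g i + ∑ i ∈ Finset.Icc (k+1) N, g i := by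
      intro g
      rw [← Finset.sum_union]
      · congr 1; ext m; simp only [Finset.mem_union, Finset.mem_Icc]; omega
      · rw [Finset.disjoint_left]; intro m; simp only [Finset.mem_Icc]; omega
    rw [hsplit, hsplit B] at htot
    linarith
end

section
/- Suppose the battery capacity is infinite, i.e. the Capacity constraints are omitted, so feasibility means 0 ≤ p_{H,i} ≤ p_i together with the Causality and Data constraints. Suppose (p*, p*_H) is the unique optimal solution of the grid power minimization problem and that p*_i = p*_{H,i} for all i (the grid energy used is zero). Then there exist water levels 0 ≤ ν_1 ≤ ν_2 ≤ … ≤ ν_N such that p*_i = max(ν_i − 1/γ_i, 0) for every i, and for every k ∈ {1,…,N−1}: if ν_k < ν_{k+1}, then either the energy causality constraint is tight at k, i.e. Σ_{i=1}^k T_f·p*_{H,i} = Σ_{i=1}^k E_i, or the cumulative data constraint is tight at k, i.e. Σ_{i=1}^k (T_f/2)·log₂(1 + γ_i p*_i) = Σ_{i=1}^k B_i. -/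
/-- Feasibility with infinite battery capacity (no capacity constraint). -/
def FeasibleInf (N : ℕ) (Tf : ℝ) (γ E B p pH : ℕ → ℝ) : Prop :=
  Alloc N p pH ∧ Causality N Tf E pH ∧ DataC N Tf γ B p

/-- Optimality: a feasible allocation minimizing grid energy (infinite battery). -/
def OptimalInf (N : ℕ) (Tf : ℝ) (γ E B p pH : ℕ → ℝ) : Prop :=
  FeasibleInf N Tf γ E B p pH ∧
  ∀ q qH : ℕ → ℝ, FeasibleInf N Tf γ E B q qH →
    gridEnergy N Tf p pH ≤ gridEnergy N Tf q qH

theorem aux_deriv_pos {f : ℝ → ℝ} {f' : ℝ} (h : HasDerivAt f f' 0) (hf : 0 < f') :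
    ∀ᶠ ε in nhdsWithin (0:ℝ) (Set.Ioi 0), f 0 ≤ f ε := by
  have h1 := (hasDerivAt_iff_tendsto_slope.mp h).eventually (lt_mem_nhds hf)
  have h2 : ∀ᶠ ε in nhdsWithin (0:ℝ) (Set.Ioi 0), 0 < slope f 0 ε :=
    h1.filter_mono (nhdsWithin_mono _ (fun x (hx : 0 < x) => ne_of_gt hx))
  filter_upwards [h2, self_mem_nhdsWithin] with ε h3 h4
  have h4' : 0 < ε := h4
  rw [slope_def_field, sub_zero] at h3
  have := (div_pos_iff_of_pos_right h4').mp h3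
  linarith

theorem aux_pert
    (N : ℕ) (Tf : ℝ) (hTf : 0 < Tf)
    (γ E B : ℕ → ℝ)
    (hγ : ∀ i ∈ Finset.Icc 1 N, 0 < γ i)
    (p pH : ℕ → ℝ)
    (hopt : OptimalInf N Tf γ E B p pH)
    (huniq : ∀ q qH : ℕ → ℝ, OptimalInf N Tf γ E B q qH →
      ∀ i ∈ Finset.Icc 1 N, q i = p i ∧ qH i = pH i)
    (hH : ∀ i ∈ Finset.Icc 1 N, p i = pH i)
    (d : ℕ → ℝ) (a : ℕ) (ha : a ∈ Finset.Icc 1 N) (hda : d a ≠ 0)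
    (h1 : ∀ i ∈ Finset.Icc 1 N, 0 < p i ∨ 0 ≤ d i)
    (h2 : ∀ k ∈ Finset.Icc 1 N, ∑ i ∈ Finset.Icc 1 k, d i ≤ 0 ∨
      ∑ i ∈ Finset.Icc 1 k, Tf * pH i < ∑ i ∈ Finset.Icc 1 k, E i)
    (h3 : ∀ k ∈ Finset.Icc 1 N, (∀ i ∈ Finset.Icc k N, d i = 0) ∨
      ∑ i ∈ Finset.Icc k N, B i < ∑ i ∈ Finset.Icc k N, rate Tf γ p i ∨
      0 < ∑ i ∈ Finset.Icc k N, d i * (γ i / (1 + γ i * p i))) : False := by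
  obtain ⟨⟨hA, hC, hD⟩, hmin⟩ := hopt
  have hp : ∀ i ∈ Finset.Icc 1 N, 0 ≤ p i := fun i hi => (hA i hi).1.trans (hA i hi).2
  have e1 : ∀ᶠ ε in nhdsWithin (0:ℝ) (Set.Ioi 0), ∀ i ∈ Finset.Icc 1 N, 0 ≤ p i + ε * d i := by
    rw [Filter.eventually_all_finset]
    intro i hi
    rcases h1 i hi with h | h
    · have : Filter.Tendsto (fun ε : ℝ => p i + ε * d i) (nhds 0) (nhds (p i + 0 * d i)) :=
        Continuous.tendsto (by fun_prop) 0
      rw [zero_mul, add_zero] at this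
      exact ((this.eventually (lt_mem_nhds h)).filter_mono nhdsWithin_le_nhds).mono
        fun _ h => le_of_lt h
    · filter_upwards [self_mem_nhdsWithin] with ε he
      have he' : 0 < ε := he
      have := hp i hi
      positivity
  have e2 : ∀ᶠ ε in nhdsWithin (0:ℝ) (Set.Ioi 0), ∀ k ∈ Finset.Icc 1 N,
      ∑ i ∈ Finset.Icc 1 k, Tf * (p i + ε * d i) ≤ ∑ i ∈ Finset.Icc 1 k, E i := by
    rw [Filter.eventually_all_finset]
    intro k hk
    have hpe : ∑ i ∈ Finset.Icc 1 k, Tf * p i = ∑ i ∈ Finset.Icc 1 k, Tf * pH i := by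
      refine Finset.sum_congr rfl fun i hi => ?_
      rw [hH i]
      simp only [Finset.mem_Icc] at *
      omega
    rcases h2 k hk with h | h
    · filter_upwards [self_mem_nhdsWithin] with ε he
      have he' : 0 < ε := he
      have e : ∑ i ∈ Finset.Icc 1 k, Tf * (p i + ε * d i)
          = ∑ i ∈ Finset.Icc 1 k, Tf * p i + Tf * ε * ∑ i ∈ Finset.Icc 1 k, d i := by
        rw [Finset.mul_sum, ← Finset.sum_add_distrib]
        exact Finset.sum_congr rfl fun i _ => by ring
      rw [e, hpe]
      have := hC k hk
      have : Tf * ε * ∑ i ∈ Finset.Icc 1 k, d i ≤ 0 :=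
        mul_nonpos_of_nonneg_of_nonpos (by positivity) h
      linarith
    · have : Filter.Tendsto (fun ε : ℝ => ∑ i ∈ Finset.Icc 1 k, Tf * (p i + ε * d i)) (nhds 0)
          (nhds (∑ i ∈ Finset.Icc 1 k, Tf * (p i + 0 * d i))) :=
        Continuous.tendsto (by fun_prop) 0
      simp only [zero_mul, add_zero] at this
      rw [hpe] at this
      exact ((this.eventually (gt_mem_nhds h)).filter_mono nhdsWithin_le_nhds).mono
        fun _ h => le_of_lt h
  have e3 : ∀ᶠ ε in nhdsWithin (0:ℝ) (Set.Ioi 0), ∀ k ∈ Finset.Icc 1 N,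
      ∑ i ∈ Finset.Icc k N, B i ≤ ∑ i ∈ Finset.Icc k N, rate Tf γ (fun i => p i + ε * d i) i := by
    rw [Filter.eventually_all_finset]
    intro k hk
    have hder : HasDerivAt
        (fun ε : ℝ => ∑ i ∈ Finset.Icc k N, rate Tf γ (fun i => p i + ε * d i) i)
        (∑ i ∈ Finset.Icc k N, Tf / 2 / Real.log 2 * (d i * (γ i / (1 + γ i * p i)))) 0 := by
      refine HasDerivAt.fun_sum fun i hi => ?_
      have hi' : i ∈ Finset.Icc 1 N := by
        simp only [Finset.mem_Icc] at *
        omega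
      have hpos : 0 < 1 + γ i * p i := by
        have := hγ i hi'
        have := hp i hi'
        positivity
      have g1 : HasDerivAt (fun ε : ℝ => 1 + γ i * (p i + ε * d i)) (γ i * d i) 0 := by
        have := ((((hasDerivAt_id (0:ℝ)).mul_const (d i)).const_add (p i)).const_mul (γ i)).const_add 1
        simpa using this
      have g2 := ((g1.log (by simpa using hpos.ne')).div_const (Real.log 2)).const_mul (Tf / 2)
      unfold rate Real.logb
      refine g2.congr_deriv ?_
      simp only [zero_mul, add_zero]
      ring
    have hz : ∑ i ∈ Finset.Icc k N, rate Tf γ (fun i => p i + 0 * d i) i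
        = ∑ i ∈ Finset.Icc k N, rate Tf γ p i := by simp
    rcases h3 k hk with h | h | h
    · refine Filter.Eventually.of_forall fun ε => ?_
      refine (hD k hk).trans (le_of_eq (Finset.sum_congr rfl fun i hi => ?_))
      simp [rate, h i hi]
    · have := hder.continuousAt.tendsto
      beta_reduce at this
      rw [hz] at this
      exact ((this.eventually (lt_mem_nhds h)).filter_mono nhdsWithin_le_nhds).mono
        fun _ h => le_of_lt h
    · have hl : 0 < Real.log 2 := Real.log_pos (by norm_num)
      have := aux_deriv_pos hder (by rw [← Finset.mul_sum]; positivity)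
      filter_upwards [this] with ε he
      beta_reduce at he
      rw [hz] at he
      exact (hD k hk).trans he
  obtain ⟨ε, ⟨⟨k1, k2⟩, k3⟩, k4⟩ := (((e1.and e2).and e3).and self_mem_nhdsWithin).exists
  have k4' : 0 < ε := k4
  have hq : OptimalInf N Tf γ E B (fun i => p i + ε * d i) (fun i => p i + ε * d i) := by
    refine ⟨⟨fun i hi => ⟨k1 i hi, le_rfl⟩, k2, k3⟩, fun q qH hq => ?_⟩
    have : gridEnergy N Tf (fun i => p i + ε * d i) (fun i => p i + ε * d i) = 0 := by
      simp [gridEnergy]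
    rw [this]
    refine Finset.sum_nonneg fun i hi => ?_
    have := (hq.1 i hi).2
    exact mul_nonneg hTf.le (by linarith)
  have := (huniq _ _ hq a ha).1
  simp only [add_eq_left, mul_eq_zero] at this
  rcases this with h | h
  · exact k4'.ne' h
  · exact hda h

theorem aux_sum_split (f : ℕ → ℝ) (k N : ℕ) (hk : k ≤ N) :
    ∑ i ∈ Finset.Icc 1 N, f i = ∑ i ∈ Finset.Icc 1 k, f i + ∑ i ∈ Finset.Icc (k+1) N, f i := by
  rw [← Finset.sum_union]
  · congr 1
    ext x
    simp only [Finset.mem_union, Finset.mem_Icc]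
    omega
  · rw [Finset.disjoint_left]
    intro x
    simp only [Finset.mem_Icc]
    omega

/-- Proposition 3: infinite battery, `(p*, p*_H)` the unique optimal
solution using no grid energy (`p*_i = p*_{H,i}` for all `i`).  Then the optimal
powers come from nonnegative non-decreasing water levels `ν_i` via
`p*_i = [ν_i − 1/γ_i]⁺`, and the water level may increase from `k` to `k+1` only if
the energy causality constraint or the cumulative data constraint is tight at `k`. -/
theorem statement_8
    (N : ℕ) (hN : 1 ≤ N) (Tf : ℝ) (hTf : 0 < Tf)
    (γ E B : ℕ → ℝ)
    (hγ : ∀ i ∈ Finset.Icc 1 N, 0 < γ i)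
    (hE : ∀ i ∈ Finset.Icc 1 N, 0 ≤ E i)
    (hB : ∀ i ∈ Finset.Icc 1 N, 0 ≤ B i)
    (pstar pHstar : ℕ → ℝ)
    (hopt : OptimalInf N Tf γ E B pstar pHstar)
    -- uniqueness of the optimal solution (on the relevant coordinates)
    (huniq : ∀ q qH : ℕ → ℝ, OptimalInf N Tf γ E B q qH →
      ∀ i ∈ Finset.Icc 1 N, q i = pstar i ∧ qH i = pHstar i)
    -- no grid energy is used
    (hH : ∀ i ∈ Finset.Icc 1 N, pstar i = pHstar i) :
    ∃ ν : ℕ → ℝ,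
      (∀ k ∈ Finset.Icc 1 N, 0 ≤ ν k) ∧
      (∀ k ∈ Finset.Icc 1 (N - 1), ν k ≤ ν (k + 1)) ∧
      (∀ i ∈ Finset.Icc 1 N, pstar i = max (ν i - 1 / γ i) 0) ∧
      (∀ k ∈ Finset.Icc 1 (N - 1), ν k < ν (k + 1) →
        (∑ i ∈ Finset.Icc 1 k, Tf * pHstar i = ∑ i ∈ Finset.Icc 1 k, E i) ∨
        (∑ i ∈ Finset.Icc 1 k, rate Tf γ pstar i = ∑ i ∈ Finset.Icc 1 k, B i)) := by
  classical
  have hpert := aux_pert N Tf hTf γ E B hγ pstar pHstar hopt huniq hH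
  obtain ⟨⟨hA, hC, hD⟩, hmin⟩ := hopt
  have hp : ∀ i ∈ Finset.Icc 1 N, 0 ≤ pstar i := fun i hi => (hA i hi).1.trans (hA i hi).2
  set v : ℕ → ℝ := fun i => pstar i + 1 / γ i with hv
  have hv0 : ∀ i ∈ Finset.Icc 1 N, 0 < v i := by
    intro i hi
    have := hγ i hi
    have := hp i hi
    simp only [hv]
    positivity
  have hg : ∀ i ∈ Finset.Icc 1 N, γ i / (1 + γ i * pstar i) = 1 / v i := by
    intro i hi
    have := hγ i hi
    have := hp i hi
    have h1 : 0 < 1 + γ i * pstar i := by positivity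
    have h2 := hv0 i hi
    rw [div_eq_div_iff h1.ne' h2.ne']
    simp only [hv]
    field_simp
    ring
  have hrate : ∀ i ∈ Finset.Icc 1 N, 0 ≤ rate Tf γ pstar i := by
    intro i hi
    have := hγ i hi
    have := hp i hi
    refine mul_nonneg (by positivity) (Real.logb_nonneg (by norm_num) ?_)
    have : 0 ≤ γ i * pstar i := by positivity
    linarith
  -- total data tight
  have htot : ∑ i ∈ Finset.Icc 1 N, B i = ∑ i ∈ Finset.Icc 1 N, rate Tf γ pstar i := by
    by_contra hne
    have hlt := lt_of_le_of_ne (hD 1 (by simp; omega)) hne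
    have hex : ∃ i, i ∈ Finset.Icc 1 N ∧ 0 < pstar i := by
      by_contra hcon
      push Not at hcon
      have h0 : ∑ i ∈ Finset.Icc 1 N, rate Tf γ pstar i = 0 := by
        refine Finset.sum_eq_zero fun i hi => ?_
        simp [rate, le_antisymm (hcon i hi) (hp i hi)]
      have := Finset.sum_nonneg hB
      linarith
    have ha := Nat.find_spec hex
    have hmin' : ∀ m, m < Nat.find hex → ¬ (m ∈ Finset.Icc 1 N ∧ 0 < pstar m) :=
      fun m hm => Nat.find_min hex hm
    generalize Nat.find hex = a at ha hmin'
    obtain ⟨ha1, ha2⟩ := ha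
    refine hpert (fun m => if m = a then -1 else 0) a ha1 (by simp) ?_ ?_ ?_
    · intro i hi
      by_cases h : i = a
      · left; rw [h]; exact ha2
      · right; simp [h]
    · intro k hk
      left
      refine Finset.sum_nonpos fun i hi => ?_
      split_ifs <;> norm_num
    · intro k hk
      by_cases h : a < k
      · left
        intro i hi
        simp only [Finset.mem_Icc] at hi
        rw [if_neg (by omega)]
      · right; left
        obtain ⟨l, rfl⟩ : ∃ l, k = l + 1 := ⟨k - 1, by simp at hk; omega⟩
        simp only [Finset.mem_Icc] at hk
        have s1 := aux_sum_split B l N (by omega)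
        have s2 := aux_sum_split (rate Tf γ pstar) l N (by omega)
        have s3 : ∑ i ∈ Finset.Icc 1 l, rate Tf γ pstar i = 0 := by
          refine Finset.sum_eq_zero fun i hi => ?_
          simp only [Finset.mem_Icc] at hi
          have hi' : i ∈ Finset.Icc 1 N := by simp; omega
          have := hmin' i (by omega)
          have h0 : pstar i = 0 := by
            refine le_antisymm ?_ (hp i hi')
            by_contra hc
            exact this ⟨hi', by linarith⟩
          simp [rate, h0]
        have s4 : 0 ≤ ∑ i ∈ Finset.Icc 1 l, B i := by
          refine Finset.sum_nonneg fun i hi => hB i ?_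
          simp only [Finset.mem_Icc] at *
          omega
        linarith
  -- two-point exchange
  have hder : ∀ a ∈ Finset.Icc 1 N, ∀ b ∈ Finset.Icc 1 N, ∀ k,
      ∑ i ∈ Finset.Icc k N, ((if i = a then (1:ℝ) else 0) - (if i = b then 1 else 0))
        * (γ i / (1 + γ i * pstar i)) = (if k ≤ a then 1 / v a else 0)
          - (if k ≤ b then 1 / v b else 0) := by
    intro a ha b hb k
    have ha' := (Finset.mem_Icc.mp ha).2
    have hb' := (Finset.mem_Icc.mp hb).2
    simp only [sub_mul, Finset.sum_sub_distrib, ite_mul, one_mul, zero_mul,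
      Finset.sum_ite_eq', Finset.mem_Icc, ha', hb', and_true, hg a ha, hg b hb]
  have hsum : ∀ a ∈ Finset.Icc 1 N, ∀ b ∈ Finset.Icc 1 N, ∀ k,
      ∑ i ∈ Finset.Icc 1 k, ((if i = a then (1:ℝ) else 0) - (if i = b then 1 else 0))
        = (if a ≤ k then 1 else 0) - (if b ≤ k then 1 else 0) := by
    intro a ha b hb k
    have ha' := (Finset.mem_Icc.mp ha).1
    have hb' := (Finset.mem_Icc.mp hb).1
    simp only [Finset.sum_sub_distrib, 
      Finset.sum_ite_eq', Finset.mem_Icc, ha', hb', true_and]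
  have hexch : ∀ a ∈ Finset.Icc 1 N, ∀ b ∈ Finset.Icc 1 N, 0 < pstar b → v a < v b →
      (∀ l ∈ Finset.Icc 1 N, a ≤ l → l < b →
        ∑ i ∈ Finset.Icc 1 l, Tf * pHstar i ≠ ∑ i ∈ Finset.Icc 1 l, E i ∧
        ∑ i ∈ Finset.Icc 1 l, rate Tf γ pstar i ≠ ∑ i ∈ Finset.Icc 1 l, B i) → False := by
    intro a ha b hb hpb hvab hsl
    have hab : a ≠ b := by
      rintro rfl
      exact lt_irrefl _ hvab
    refine hpert (fun i => (if i = a then (1:ℝ) else 0) - (if i = b then 1 else 0)) a ha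
      (by simp [hab]) ?_ ?_ ?_
    · intro i hi
      by_cases h : i = b
      · left; rw [h]; exact hpb
      · right
        simp only [h, if_false, sub_zero]
        split_ifs <;> norm_num
    · intro k hk
      rw [hsum a ha b hb k]
      by_cases h : a ≤ k ∧ k < b
      · right
        exact lt_of_le_of_ne (hC k hk) (hsl k hk h.1 h.2).1
      · left
        split_ifs <;> first | (exfalso; omega) | norm_num
    · intro k hk
      rw [hder a ha b hb k]
      have hva := hv0 a ha
      have hvb := hv0 b hb
      have hinv : 1 / v b < 1 / v a := one_div_lt_one_div_of_lt hva hvab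
      by_cases hka : k ≤ a
      · right; right
        rw [if_pos hka]
        split_ifs
        · linarith
        · rw [sub_zero]; positivity
      · by_cases hkb : k ≤ b
        · right; left
          obtain ⟨l, rfl⟩ : ∃ l, k = l + 1 := ⟨k - 1, by omega⟩
          simp only [Finset.mem_Icc] at hk ha
          have hl : l ∈ Finset.Icc 1 N := by simp; omega
          have s1 := aux_sum_split B l N (by omega)
          have s2 := aux_sum_split (rate Tf γ pstar) l N (by omega)
          have s3 := hD (l+1) (by simp; omega)
          refine lt_of_le_of_ne s3 fun he => (hsl l hl (by omega) (by omega)).2 ?_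
          linarith
        · left
          intro i hi
          simp only [Finset.mem_Icc] at hi
          rw [if_neg (by omega), if_neg (by omega), sub_zero]
  -- water levels
  set T : ℕ → Prop := fun k =>
        (∑ i ∈ Finset.Icc 1 k, Tf * pHstar i = ∑ i ∈ Finset.Icc 1 k, E i) ∨
        (∑ i ∈ Finset.Icc 1 k, rate Tf γ pstar i = ∑ i ∈ Finset.Icc 1 k, B i) with hT
  set S : ℕ → Finset ℕ := fun k => (Finset.Icc 1 N).filter
    (fun j => ∀ l, j ≤ l → l < k → ¬ T l) with hS
  have hSm : ∀ k ∈ Finset.Icc 1 N, k ∈ S k := by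
    intro k hk
    simp only [hS, Finset.mem_filter]
    exact ⟨hk, fun l _ _ => by omega⟩
  have hSne : ∀ k ∈ Finset.Icc 1 N, ((S k).image v).Nonempty := fun k hk =>
    ⟨v k, Finset.mem_image_of_mem _ (hSm k hk)⟩
  set ν : ℕ → ℝ := fun k => if h : ((S k).image v).Nonempty then ((S k).image v).min' h else 0
    with hν
  have hνle : ∀ k, ∀ j ∈ S k, ν k ≤ v j := by
    intro k j hj
    have hm := Finset.mem_image_of_mem v hj
    have : ((S k).image v).Nonempty := ⟨_, hm⟩
    simp only [hν, dif_pos this]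
    exact Finset.min'_le _ _ hm
  have hνmem : ∀ k ∈ Finset.Icc 1 N, ∃ j ∈ S k, v j = ν k := by
    intro k hk
    simp only [hν, dif_pos (hSne k hk)]
    exact Finset.mem_image.mp (Finset.min'_mem _ (hSne k hk))
  refine ⟨ν, ?_, ?_, ?_, ?_⟩
  · intro k hk
    obtain ⟨j, hj, he⟩ := hνmem k hk
    rw [← he]
    exact (hv0 j (Finset.mem_filter.mp hj).1).le
  · intro k hk
    simp only [Finset.mem_Icc] at hk
    obtain ⟨j, hj, he⟩ := hνmem (k+1) (by simp; omega)
    rw [← he]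
    refine hνle k j ?_
    simp only [hS, Finset.mem_filter] at hj ⊢
    exact ⟨hj.1, fun l h1 h2 => hj.2 l h1 (by omega)⟩
  · intro k hk
    rcases (hp k hk).eq_or_lt with h0 | h0
    · have := hνle k k (hSm k hk)
      simp only [hv, ← h0, zero_add] at this
      rw [← h0, max_eq_right (by linarith)]
    · have hle : v k ≤ ν k := by
        obtain ⟨j, hj, he⟩ := hνmem k hk
        rw [← he]
        by_contra hc
        push Not at hc
        simp only [hS, Finset.mem_filter] at hj
        refine hexch j hj.1 k hk h0 hc fun l _ h1 h2 => ?_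
        have := hj.2 l h1 h2
        simp only [hT, not_or] at this
        exact this
      have he : ν k = v k := le_antisymm (hνle k k (hSm k hk)) hle
      rw [he]
      simp only [hv, add_sub_cancel_right]
      rw [max_eq_left h0.le]
  · intro k hk hlt
    simp only [Finset.mem_Icc] at hk
    by_contra hnT
    obtain ⟨j, hj, he⟩ := hνmem k (by simp; omega)
    have : j ∈ S (k+1) := by
      simp only [hS, Finset.mem_filter] at hj ⊢
      refine ⟨hj.1, fun l h1 h2 => ?_⟩
      by_cases hlk : l = k
      · rw [hlk]; exact hnT
      · exact hj.2 l h1 (by omega)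
    have := hνle (k+1) j this
    linarith
end

section
/- Suppose the battery capacity is infinite, i.e. the Capacity constraints are omitted, and the feasible set of the grid power minimization problem is nonempty with the minimum attained. Then there exists an optimal solution (p*, p*_H) and an index k̄ ∈ {0, 1, …, N} such that p*_k = p*_{H,k} for every k > k̄ (only harvested energy is used after frame k̄), and p*_k > p*_{H,k} for every k ≤ k̄ with p*_k > 0 (grid power is used in every positive-power frame up to frame k̄). -/
/-- Proposition 4, threshold part: with infinite battery capacity, if
the feasible set is nonempty and the minimum of the grid energy is attained, there is
an optimal solution `(p*, p*_H)` and a threshold `k̄ ∈ {0, 1, …, N}` such that after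
frame `k̄` only harvested energy is used, while in every positive-power frame up to
`k̄` some grid power is used. -/
theorem statement_10
    (N : ℕ) (hN : 1 ≤ N) (Tf : ℝ) (hTf : 0 < Tf)
    (γ E B : ℕ → ℝ)
    (hγ : ∀ i ∈ Finset.Icc 1 N, 0 < γ i)
    (hE : ∀ i ∈ Finset.Icc 1 N, 0 ≤ E i)
    (hB : ∀ i ∈ Finset.Icc 1 N, 0 ≤ B i)
    (hfeas : ∃ p pH : ℕ → ℝ, FeasibleInf N Tf γ E B p pH)
    (hatt : ∃ p pH : ℕ → ℝ, OptimalInf N Tf γ E B p pH) :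
    ∃ (pstar pHstar : ℕ → ℝ) (kbar : ℕ),
      OptimalInf N Tf γ E B pstar pHstar ∧ kbar ≤ N ∧
      (∀ k ∈ Finset.Icc 1 N, kbar < k → pstar k = pHstar k) ∧
      (∀ k ∈ Finset.Icc 1 N, k ≤ kbar → 0 < pstar k → pHstar k < pstar k) := by
  classical
  obtain ⟨p, pH, ⟨⟨hA, hC, hD⟩, hopt⟩⟩ := hatt
  by_cases hne : ((Finset.Icc 1 N).filter (fun k => pH k < p k)).Nonempty
  swap
  · refine ⟨p, pH, 0, ⟨⟨hA, hC, hD⟩, hopt⟩, Nat.zero_le _, ?_, ?_⟩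
    · intro k hk _
      by_contra hcon
      exact hne ⟨k, Finset.mem_filter.2 ⟨hk, lt_of_le_of_ne (hA k hk).2 (Ne.symm hcon)⟩⟩
    · intro k hk h0
      have := (Finset.mem_Icc.1 hk).1
      omega
  obtain ⟨m, hm, hmax⟩ := Finset.exists_max_image _ (fun k => k) hne
  obtain ⟨hmI, hmlt⟩ := Finset.mem_filter.1 hm
  have hm1 := (Finset.mem_Icc.1 hmI).1
  have hmN := (Finset.mem_Icc.1 hmI).2
  set S : ℝ := ∑ i ∈ Finset.Icc 1 N, (if i < m then pH i else 0) with hS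
  have hS0 : 0 ≤ S := by
    refine Finset.sum_nonneg fun i hi => ?_
    split_ifs
    · exact (hA i hi).1
    · exact le_rfl
  set g : ℝ := p m - pH m with hg
  have hg0 : 0 < g := sub_pos.2 hmlt
  obtain ⟨c, hc0, hc1, hcS⟩ : ∃ c : ℝ, 0 < c ∧ c < 1 ∧ c * S < g := by
    have hpos : 0 < g + S + 1 := by linarith
    refine ⟨g / (g + S + 1), div_pos hg0 hpos, (div_lt_one hpos).2 (by linarith), ?_⟩
    rw [div_mul_eq_mul_div, div_lt_iff₀ hpos]
    nlinarith
  have hcS0 : 0 ≤ c * S := mul_nonneg hc0.le hS0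
  set q : ℕ → ℝ := fun i => pH i - c * (if i < m then pH i else 0)
    + (if i = m then c * S else 0) with hq
  have hql : ∀ i, i < m → q i = (1 - c) * pH i := by
    intro i hi
    simp only [hq, if_pos hi, if_neg hi.ne]; ring
  have hqm : q m = pH m + c * S := by simp [hq]
  have hqg : ∀ i, m < i → q i = pH i := by
    intro i hi
    simp [hq, hi.ne', hi.le]
  have hsum : ∀ k, m ≤ k → k ≤ N → ∑ i ∈ Finset.Icc 1 k, q i = ∑ i ∈ Finset.Icc 1 k, pH i := by
    intro k hmk hkN
    have h1 : ∑ i ∈ Finset.Icc 1 k, (if i < m then pH i else 0) = S := by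
      rw [hS]
      refine Finset.sum_subset (Finset.Icc_subset_Icc le_rfl hkN) ?_
      intro i hi hi'
      simp only [Finset.mem_Icc] at hi hi'
      rw [if_neg (by omega)]
    simp only [hq, Finset.sum_add_distrib, Finset.sum_sub_distrib, ← Finset.mul_sum, h1,
      Finset.sum_ite_eq', Finset.mem_Icc]
    rw [if_pos ⟨hm1, hmk⟩]; ring
  have hgrid : gridEnergy N Tf p q = gridEnergy N Tf p pH := by
    simp only [gridEnergy, ← Finset.mul_sum, Finset.sum_sub_distrib, hsum N hmN le_rfl]
  refine ⟨p, q, m, ⟨⟨?_, ?_, hD⟩, ?_⟩, hmN, ?_, ?_⟩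
  · intro i hi
    obtain ⟨h0, h1⟩ := hA i hi
    rcases lt_trichotomy i m with h | h | h
    · rw [hql i h]
      exact ⟨mul_nonneg (by linarith) h0, by nlinarith⟩
    · subst h
      rw [hqm]
      exact ⟨by linarith, by linarith⟩
    · rw [hqg i h]; exact ⟨h0, h1⟩
  · intro k hk
    refine le_trans ?_ (hC k hk)
    obtain ⟨hk1, hkN⟩ := Finset.mem_Icc.1 hk
    rw [← Finset.mul_sum, ← Finset.mul_sum]
    refine mul_le_mul_of_nonneg_left ?_ hTf.le
    rcases le_or_gt m k with h | h
    · exact (hsum k h hkN).le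
    · refine Finset.sum_le_sum fun i hi => ?_
      obtain ⟨hi1, hi2⟩ := Finset.mem_Icc.1 hi
      rw [hql i (by omega)]
      have := (hA i (Finset.mem_Icc.2 ⟨hi1, by omega⟩)).1
      nlinarith
  · intro r rH hr
    rw [hgrid]; exact hopt r rH hr
  · intro k hk hmk
    rw [hqg k hmk]
    by_contra hcon
    have := hmax k (Finset.mem_filter.2 ⟨hk, lt_of_le_of_ne (hA k hk).2 (Ne.symm hcon)⟩)
    omega
  · intro k hk hkm hpk
    obtain ⟨h0, h1⟩ := hA k hk
    rcases hkm.lt_or_eq with h | h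
    · rw [hql k h]
      rcases h0.eq_or_lt with h2 | h2
      · rw [← h2]; simpa using hpk
      · nlinarith [mul_pos hc0 h2]
    · subst h
      rw [hqm]; linarith
end

section
/- (Exchange lemma, infinite battery.) Suppose the Capacity constraints are omitted, and let (p, p_H) satisfy 0 ≤ p_{H,i} ≤ p_i for all i together with the Causality and Data constraints. Fix k ∈ {1,…,N−1} and set δ = min{ p_{H,k}, p_{k+1} − p_{H,k+1} } ≥ 0. Define p'_H by p'_{H,k} = p_{H,k} − δ, p'_{H,k+1} = p_{H,k+1} + δ, and p'_{H,i} = p_{H,i} for all other i. Then (p, p'_H) also satisfies 0 ≤ p'_{H,i} ≤ p_i for all i together with the Causality and Data constraints, and it has the same grid energy: Σ_{i=1}^N T_f·(p_i − p'_{H,i}) = Σ_{i=1}^N T_f·(p_i − p_{H,i}). -/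
/-- exchange lemma, infinite battery: moving the amount
`δ = min{p_{H,k}, p_{k+1} − p_{H,k+1}}` of harvested power from frame `k` to frame
`k+1` preserves feasibility and the grid energy. -/
theorem statement_11
    (N : ℕ) (hN : 1 ≤ N) (Tf : ℝ) (hTf : 0 < Tf)
    (γ E B : ℕ → ℝ)
    (hγ : ∀ i ∈ Finset.Icc 1 N, 0 < γ i)
    (hE : ∀ i ∈ Finset.Icc 1 N, 0 ≤ E i)
    (hB : ∀ i ∈ Finset.Icc 1 N, 0 ≤ B i)
    (p pH : ℕ → ℝ)
    (hfeas : FeasibleInf N Tf γ E B p pH)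
    (k : ℕ) (hk : k ∈ Finset.Icc 1 (N - 1))
    (δ : ℝ) (hδ : δ = min (pH k) (p (k + 1) - pH (k + 1)))
    (pH' : ℕ → ℝ)
    (hk' : pH' k = pH k - δ)
    (hk1' : pH' (k + 1) = pH (k + 1) + δ)
    (hrest : ∀ i : ℕ, i ≠ k → i ≠ k + 1 → pH' i = pH i) :
    0 ≤ δ ∧ FeasibleInf N Tf γ E B p pH' ∧
      gridEnergy N Tf p pH' = gridEnergy N Tf p pH := by
  obtain ⟨hA, hC, hD⟩ := hfeas
  rw [Finset.mem_Icc] at hk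
  obtain ⟨h1, h2⟩ := hk
  have hAk := hA k (Finset.mem_Icc.2 ⟨h1, by omega⟩)
  have hAk1 := hA (k + 1) (Finset.mem_Icc.2 ⟨by omega, by omega⟩)
  have hd0 : 0 ≤ δ := by
    rw [hδ]; exact le_min hAk.1 (by linarith [hAk1.2])
  have hd1 : δ ≤ pH k := hδ ▸ min_le_left _ _
  have hd2 : δ ≤ p (k + 1) - pH (k + 1) := hδ ▸ min_le_right _ _
  have key : ∀ m : ℕ, ∑ i ∈ Finset.Icc 1 m, pH' i
      = ∑ i ∈ Finset.Icc 1 m, pH i - if m = k then δ else 0 := by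
    intro m
    induction m with
    | zero =>
      have : (0 : ℕ) ≠ k := by omega
      simp [this]
    | succ m ih =>
      rw [Finset.sum_Icc_succ_top (by omega), Finset.sum_Icc_succ_top (by omega), ih]
      by_cases e1 : m + 1 = k
      · have e2 : m ≠ k := by omega
        rw [if_neg e2, if_pos e1, e1, hk']; ring
      · by_cases e2 : m = k
        · rw [if_pos e2, if_neg e1, e2, hk1']; ring
        · rw [if_neg e2, if_neg e1, hrest (m + 1) e1 (by omega)]; ring
  refine ⟨hd0, ⟨?_, ?_, hD⟩, ?_⟩
  · intro i hi
    have hAi := hA i hi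
    by_cases e1 : i = k
    · subst e1
      rw [hk']; constructor <;> linarith [hAk.2]
    · by_cases e2 : i = k + 1
      · subst e2
        rw [hk1']; constructor <;> linarith [hAk1.1]
      · rw [hrest i e1 e2]; exact hAi
  · intro m hm
    refine le_trans ?_ (hC m hm)
    rw [← Finset.mul_sum, ← Finset.mul_sum, key m]
    apply mul_le_mul_of_nonneg_left _ hTf.le
    split_ifs <;> linarith
  · unfold gridEnergy
    have hNk : N ≠ k := by omega
    rw [← Finset.mul_sum, ← Finset.mul_sum, Finset.sum_sub_distrib, Finset.sum_sub_distrib,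
      key N, if_neg hNk, sub_zero]
end

section
/- Suppose the battery capacity is infinite, i.e. the Capacity constraints are omitted. If (p*, p*_H) is an optimal solution of the grid power minimization problem with strictly positive grid energy, Σ_{i=1}^N (p*_i − p*_{H,i}) > 0, then the Data constraint for k = 1 holds with equality: Σ_{i=1}^N (T_f/2)·log₂(1 + γ_i p*_i) = Σ_{i=1}^N B_i. -/
/-- with infinite battery capacity, if an optimal solution uses
strictly positive grid energy, then the data constraint for `k = 1` holds with
equality: `Σ_{i=1}^N (T_f/2)·log₂(1 + γ_i p*_i) = Σ_{i=1}^N B_i`. -/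
theorem statement_12
    (N : ℕ) (hN : 1 ≤ N) (Tf : ℝ) (hTf : 0 < Tf)
    (γ E B : ℕ → ℝ)
    (hγ : ∀ i ∈ Finset.Icc 1 N, 0 < γ i)
    (hE : ∀ i ∈ Finset.Icc 1 N, 0 ≤ E i)
    (hB : ∀ i ∈ Finset.Icc 1 N, 0 ≤ B i)
    (pstar pHstar : ℕ → ℝ)
    (hopt : OptimalInf N Tf γ E B pstar pHstar)
    (hpos : 0 < ∑ i ∈ Finset.Icc 1 N, (pstar i - pHstar i)) :
    ∑ i ∈ Finset.Icc 1 N, rate Tf γ pstar i = ∑ i ∈ Finset.Icc 1 N, B i := by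
  obtain ⟨⟨hA, hC, hD⟩, hmin⟩ := hopt
  by_contra hne
  have hslack : ∑ i ∈ Finset.Icc 1 N, B i < ∑ i ∈ Finset.Icc 1 N, rate Tf γ pstar i :=
    lt_of_le_of_ne (hD 1 (Finset.mem_Icc.2 ⟨le_refl _, hN⟩)) (Ne.symm hne)
  obtain ⟨m0, hm0, hm0pos⟩ : ∃ m ∈ Finset.Icc 1 N, 0 < pstar m - pHstar m :=
    Finset.exists_lt_of_sum_lt (f := fun _ => (0 : ℝ)) (by simpa using hpos)
  classical
  have hex : ∃ j, j ∈ Finset.Icc 1 N ∧ 0 < pstar j :=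
    ⟨m0, hm0, by have := hA m0 hm0; linarith⟩
  obtain ⟨j, ⟨hj, hjpos⟩, hjmin⟩ : ∃ j, (j ∈ Finset.Icc 1 N ∧ 0 < pstar j) ∧
      ∀ i, i ∈ Finset.Icc 1 N ∧ 0 < pstar i → j ≤ i :=
    ⟨Nat.find hex, Nat.find_spec hex, fun i hi => Nat.find_min' hex hi⟩
  obtain ⟨m, hm, hmpos, hjm, hor⟩ : ∃ m, m ∈ Finset.Icc 1 N ∧ 0 < pstar m - pHstar m ∧ j ≤ m ∧
      (m = j ∨ pHstar j = pstar j) := by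
    by_cases h : pHstar j < pstar j
    · exact ⟨j, hj, by linarith, le_refl _, Or.inl rfl⟩
    · exact ⟨m0, hm0, hm0pos, hjmin m0 ⟨hm0, by have := hA m0 hm0; linarith⟩,
        Or.inr (le_antisymm (hA j hj).2 (not_lt.1 h))⟩
  have hγj := hγ j hj
  have hcont : ContinuousAt (fun d : ℝ => Tf / 2 * Real.logb 2 (1 + γ j * (pstar j - d))) 0 := by
    have h1 : (1 + γ j * (pstar j - 0)) ≠ 0 := by
      have : 0 < γ j * pstar j := mul_pos hγj hjpos
      rw [sub_zero]; linarith
    have h2 : ContinuousAt (fun d : ℝ => 1 + γ j * (pstar j - d)) 0 := by fun_prop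
    exact (((h2.log h1).div_const (Real.log 2))).const_mul (Tf / 2)
  have hlt : rate Tf γ pstar j - (∑ i ∈ Finset.Icc 1 N, rate Tf γ pstar i
      - ∑ i ∈ Finset.Icc 1 N, B i) < Tf / 2 * Real.logb 2 (1 + γ j * (pstar j - 0)) := by
    rw [sub_zero]; unfold rate at *; linarith
  have hev := (hcont.eventually (lt_mem_nhds hlt)).and
    ((gt_mem_nhds hjpos).and (gt_mem_nhds hmpos))
  obtain ⟨d, hd, hd1, hd2, hd3⟩ : ∃ d : ℝ, 0 < d ∧ (rate Tf γ pstar j -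
      (∑ i ∈ Finset.Icc 1 N, rate Tf γ pstar i - ∑ i ∈ Finset.Icc 1 N, B i)
        < Tf / 2 * Real.logb 2 (1 + γ j * (pstar j - d))) ∧ d < pstar j ∧
        d < pstar m - pHstar m := by
    obtain ⟨ε, hε, hb⟩ := Metric.eventually_nhds_iff.1 hev
    refine ⟨ε / 2, by linarith, hb ?_⟩
    rw [Real.dist_eq, sub_zero, abs_of_pos (by linarith)]
    linarith
  set q : ℕ → ℝ := fun i => pstar i - if i = j then d else 0 with hq
  set qH : ℕ → ℝ := fun i => pHstar i - (if i = j then d else 0) + if i = m then d else 0 with hqH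
  have hfeas : FeasibleInf N Tf γ E B q qH := by
    refine ⟨?_, ?_, ?_⟩
    · intro i hi
      have h1 := hA i hi
      simp only [hq, hqH]
      by_cases hij : i = j
      · subst hij
        by_cases him : i = m
        · subst him
          simp only [if_true]
          constructor <;> linarith
        · have hh : pHstar i = pstar i := hor.resolve_left (fun h => him h.symm)
          simp only [if_true, if_neg him]
          constructor <;> linarith
      · by_cases him : i = m
        · subst him
          simp only [if_true, if_neg hij]
          constructor <;> linarith
        · simp only [if_neg him, if_neg hij]
          constructor <;> linarith
    · intro k hk
      refine le_trans ?_ (hC k hk)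
      rw [← Finset.mul_sum, ← Finset.mul_sum]
      refine mul_le_mul_of_nonneg_left ?_ hTf.le
      simp only [hqH, Finset.sum_add_distrib, Finset.sum_sub_distrib, Finset.sum_ite_eq']
      have hj1 := (Finset.mem_Icc.1 hj).1
      by_cases hmk : m ∈ Finset.Icc 1 k
      · have hjk : j ∈ Finset.Icc 1 k :=
          Finset.mem_Icc.2 ⟨hj1, hjm.trans (Finset.mem_Icc.1 hmk).2⟩
        simp only [if_pos hmk, if_pos hjk]; linarith
      · rw [if_neg hmk]
        split_ifs <;> linarith
    · intro k hk
      have hr : ∀ i, rate Tf γ q i = rate Tf γ pstar i -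
          if i = j then rate Tf γ pstar j - Tf / 2 * Real.logb 2 (1 + γ j * (pstar j - d))
          else 0 := by
        intro i
        by_cases hij : i = j
        · subst hij; simp [rate, hq]
        · simp [rate, hq, hij]
      simp only [hr, Finset.sum_sub_distrib, Finset.sum_ite_eq']
      have hk' := Finset.mem_Icc.1 hk
      have hj' := Finset.mem_Icc.1 hj
      by_cases hkj : k ≤ j
      · rw [if_pos (Finset.mem_Icc.2 ⟨hkj, hj'.2⟩)]
        have hsub : Finset.Icc k N ⊆ Finset.Icc 1 N := Finset.Icc_subset_Icc_left hk'.1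
        have e1 : ∑ i ∈ Finset.Icc k N, rate Tf γ pstar i
            = ∑ i ∈ Finset.Icc 1 N, rate Tf γ pstar i := by
          refine Finset.sum_subset hsub ?_
          intro i hi hi2
          have hik : i < k := by
            by_contra hc
            exact hi2 (Finset.mem_Icc.2 ⟨not_lt.1 hc, (Finset.mem_Icc.1 hi).2⟩)
          have hz : pstar i = 0 := by
            have h1 := hA i hi
            by_contra hc
            have : 0 < pstar i := lt_of_le_of_ne (h1.1.trans h1.2) (Ne.symm hc)
            have := hjmin i ⟨hi, this⟩
            omega
          simp [rate, hz]
        have e2 : ∑ i ∈ Finset.Icc k N, B i ≤ ∑ i ∈ Finset.Icc 1 N, B i :=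
          Finset.sum_le_sum_of_subset_of_nonneg hsub (fun i hi _ => hB i hi)
        linarith
      · rw [if_neg (fun h => hkj (Finset.mem_Icc.1 h).1), sub_zero]
        exact hD k hk
  have hle := hmin q qH hfeas
  unfold gridEnergy at hle
  rw [← Finset.mul_sum, ← Finset.mul_sum] at hle
  have hle2 := le_of_mul_le_mul_left hle hTf
  simp only [hq, hqH, Finset.sum_add_distrib, Finset.sum_sub_distrib, Finset.sum_ite_eq',
    if_pos hj, if_pos hm] at hle2
  linarith
end
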